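/- arXiv:2205.11351 — 4 statements merged into one kernel-verified Lean document; each statement's English description precedes it below -/
import Mathlib

section
/- Let w ∈ ℂ with Re(w) > 0 and let c ∈ (0,1). Then (1/(2πi)) ∫_{(c)} ( π² ζ(1−s) / (2 cos(πs/2)) ) w^{−s} ds = π² ( 1/(e^{2πw} − 1) − 1/(2πw) ). -/
open Filter Topology MeasureTheory

noncomputable def eulerGamma : ℝ := Real.eulerMascheroniConstant

noncomputable def gamma1 : ℝ :=
  limUnder atTop (fun n : ℕ => ∑ j ∈ Finset.Icc 1 n, Real.log j / j - (Real.log n) ^ 2 / 2)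

/-!
Let `F z = 1 / (eᶻ - 1) - 1 / z`. Expanding `1 / (eˣ - 1)` in powers of `e⁻ˣ` shows that its Mellin
transform is `Γ(s) ζ(s)` for `Re s > 1`, and removing the polar part `1 / x` carries this identity
across the pole at `s = 1`: the Mellin transform of `F` is `Γ(s) ζ(s)` for `0 < Re s < 1`.

Since `F` is holomorphic on the right half-plane and well controlled along rays, replacing `F(x)`
by `F(wx)` multiplies the Mellin transform by `w⁻ˢ`. Taking `w` close to the imaginary axis, this
forces the Mellin transform to decay like `exp (-θ |Im s|)` for every `θ < π / 2`, so that Mellin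
inversion recovers `F` on the whole half-plane and not only on the positive axis. By the functional
equation the integrand in question is `π² (2πw)⁻ˢ Γ(s) ζ(s)`, and the result is the inversion of
`F` at `2πw`.
-/

open Set Complex

section Rays

lemma isOpen_setOf_re_pos : IsOpen {z : ℂ | 0 < z.re} :=
  isOpen_lt continuous_const continuous_re

lemma re_mul_ofReal_pos {w : ℂ} (hw : 0 < w.re) {x : ℝ} (hx : 0 < x) : 0 < (w * x).re := by
  simpa using mul_pos hw hx

lemma continuousOn_comp_mul_ofReal {X : Type*} [TopologicalSpace X] {f : ℂ → X} {w : ℂ}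
    (hf : ContinuousOn f {z | 0 < z.re}) (hw : 0 < w.re) :
    ContinuousOn (fun x : ℝ => f (w * x)) (Ioi 0) :=
  hf.comp (by fun_prop) fun _ hx => re_mul_ofReal_pos hw hx

lemma hasDerivAt_comp_mul_ofReal {E : Type*} [NormedAddCommGroup E] [NormedSpace ℂ E] {f : ℂ → E}
    {w : ℂ} (hf : DifferentiableOn ℂ f {z | 0 < z.re}) (hw : 0 < w.re) {x : ℝ} (hx : 0 < x) :
    HasDerivAt (fun v : ℂ => f (v * x)) ((x : ℂ) • deriv f (w * x)) w := by
  have hfx : HasDerivAt f (deriv f (w * x)) (w * x) :=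
    (hf.differentiableAt (isOpen_setOf_re_pos.mem_nhds (re_mul_ofReal_pos hw hx))).hasDerivAt
  simpa [Function.comp_def] using hfx.scomp w ((hasDerivAt_id w).mul_const (x : ℂ))

lemma ofReal_mul_cpow {w : ℂ} {r : ℝ} (hr : 0 < r) (hw : w ≠ 0) (s : ℂ) :
    (r * w) ^ s = (r : ℂ) ^ s * w ^ s := by
  have hr' : (r : ℂ) ≠ 0 := ofReal_ne_zero.2 hr.ne'
  rw [cpow_def_of_ne_zero (mul_ne_zero hr' hw), cpow_def_of_ne_zero hr', cpow_def_of_ne_zero hw,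
    log_ofReal_mul hr hw, ofReal_log hr.le, add_mul, Complex.exp_add]

lemma norm_cpow_neg_vertical {w : ℂ} (hw : w ≠ 0) (σ t : ℝ) :
    ‖w ^ (-(σ + t * I) : ℂ)‖ = ‖w‖ ^ (-σ) * Real.exp (w.arg * t) := by
  simp [norm_cpow_of_ne_zero hw, Real.exp_neg, div_inv_eq_mul]

lemma integrable_exp_neg_mul_abs {b : ℝ} (hb : 0 < b) :
    Integrable fun t : ℝ => Real.exp (-(b * |t|)) := by
  have hexp : IntegrableOn (fun t : ℝ => Real.exp (-(b * t))) (Ioi 0) := by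
    simpa only [neg_mul] using integrableOn_exp_mul_Ioi (neg_lt_zero.2 hb) 0
  refine (integrable_fun_norm_addHaar volume (f := fun t : ℝ => Real.exp (-(b * t)))).2 ?_
  simpa using hexp

end Rays

section Mellin

variable {E : Type*} [NormedAddCommGroup E] [NormedSpace ℂ E]

lemma norm_cpow_sub_one_smul {x : ℝ} (hx : 0 < x) (s : ℂ) (a : E) :
    ‖(x : ℂ) ^ (s - 1) • a‖ = x ^ (s.re - 1) * ‖a‖ := by
  rw [norm_smul, norm_cpow_eq_rpow_re_of_pos hx, sub_re, one_re]

lemma aestronglyMeasurable_cpow_smul {g : ℝ → E} (hg : ContinuousOn g (Ioi 0))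
    (s : ℂ) : AEStronglyMeasurable (fun x : ℝ => (x : ℂ) ^ (s - 1) • g x)
      (volume.restrict (Ioi 0)) := by
  refine ContinuousOn.aestronglyMeasurable (fun x hx => ?_) measurableSet_Ioi
  exact (continuousAt_ofReal_cpow_const x (s - 1) (.inr (ne_of_gt hx))).continuousWithinAt.smul
    (hg x hx)

lemma norm_mellin_le (g : ℝ → E) (s : ℂ) :
    ‖mellin g s‖ ≤ ∫ x in Ioi (0 : ℝ), x ^ (s.re - 1) * ‖g x‖ := by
  refine (norm_integral_le_integral_norm _).trans_eq ?_
  exact setIntegral_congr_fun measurableSet_Ioi fun x hx => norm_cpow_sub_one_smul hx s (g x)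

lemma continuous_mellin_vertical {g : ℝ → E} {σ : ℝ}
    (hg : ∀ t : ℝ, MellinConvergent g (σ + t * I)) :
    Continuous fun t : ℝ => mellin g (σ + t * I) := by
  refine continuous_of_dominated (fun t => (hg t).aestronglyMeasurable) (fun t => ?_)
    (hg 0).norm ?_
  · filter_upwards [ae_restrict_mem measurableSet_Ioi] with x (hx : 0 < x)
    rw [norm_cpow_sub_one_smul hx, norm_cpow_sub_one_smul hx]
    simp
  · filter_upwards [ae_restrict_mem measurableSet_Ioi] with x (hx : 0 < x)
    have hx0 : (x : ℂ) ≠ 0 := ofReal_ne_zero.2 hx.ne'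
    exact (Continuous.const_cpow (by fun_prop) (.inl hx0)).smul continuous_const

end Mellin

section RightHalfPlane

variable {E : Type*} [NormedAddCommGroup E] [NormedSpace ℂ E] {f : ℂ → E} {σ : ℝ} {s w : ℂ}

/-- A holomorphic function on the right half-plane whose values along the rays `v · (0, ∞)` are,
locally uniformly in the direction `v`, dominated by a function with a convergent Mellin transform
on the line `Re s = σ`. For such functions the ray of integration in the Mellin transform may be
rotated. -/
structure MellinHolomorphic (f : ℂ → E) (σ : ℝ) : Prop where
  differentiableOn : DifferentiableOn ℂ f {z | 0 < z.re}
  exists_dominating : ∀ w : ℂ, 0 < w.re → ∃ g : ℝ → ℝ,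
    IntegrableOn (fun x : ℝ => x ^ (σ - 1) * g x) (Ioi 0) ∧
      ∀ᶠ v in 𝓝 w, ∀ x : ℝ, 0 < x → ‖f (v * x)‖ ≤ g x

namespace MellinHolomorphic

lemma mellinConvergent (hf : MellinHolomorphic f σ) (hs : s.re = σ) (hw : 0 < w.re) :
    MellinConvergent (fun x : ℝ => f (w * x)) s := by
  obtain ⟨g, hg, hfg⟩ := hf.exists_dominating w hw
  refine Integrable.mono' hg (aestronglyMeasurable_cpow_smul
    (continuousOn_comp_mul_ofReal hf.differentiableOn.continuousOn hw) s) ?_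
  filter_upwards [ae_restrict_mem measurableSet_Ioi] with x (hx : 0 < x)
  rw [norm_cpow_sub_one_smul hx, hs]
  gcongr
  exact hfg.self_of_nhds x hx

lemma exists_norm_deriv_le (hf : MellinHolomorphic f σ) (hw : 0 < w.re) :
    ∃ g : ℝ → ℝ, IntegrableOn (fun x : ℝ => x ^ (σ - 1) * g x) (Ioi 0) ∧
      ∀ᶠ v in 𝓝 w, ∀ x : ℝ, 0 < x → ‖(x : ℂ) • deriv f (v * x)‖ ≤ g x := by
  obtain ⟨g, hg, hfg⟩ := hf.exists_dominating w hw
  obtain ⟨r, hr, hball⟩ := Metric.eventually_nhds_iff_ball.1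
    (hfg.and (isOpen_setOf_re_pos.mem_nhds hw))
  refine ⟨fun x => g x / (r / 2), ?_, ?_⟩
  · simpa only [IntegrableOn, mul_div_assoc] using hg.div_const (r / 2)
  filter_upwards [Metric.ball_mem_nhds w (half_pos hr)] with v hv x hx
  have hsub : Metric.closedBall v (r / 2) ⊆ Metric.ball w r :=
    Metric.closedBall_subset_ball' (by linarith [Metric.mem_ball.1 hv])
  have hderiv : ∀ u ∈ Metric.ball w r,
      HasDerivAt (fun z : ℂ => f (z * x)) ((x : ℂ) • deriv f (u * x)) u := fun u hu =>
    hasDerivAt_comp_mul_ofReal hf.differentiableOn (hball u hu).2 hx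
  rw [← (hderiv v (hsub (Metric.mem_closedBall_self (half_pos hr).le))).deriv]
  refine norm_deriv_le_of_forall_mem_sphere_norm_le (half_pos hr) ?_
    fun z hz => (hball z (hsub (Metric.sphere_subset_closedBall hz))).1 x hx
  exact DifferentiableOn.diffContOnCl_ball
    (U := Metric.ball w r) (fun u hu => (hderiv u hu).differentiableAt.differentiableWithinAt) hsub

variable [CompleteSpace E]

lemma differentiableOn_mellin (hf : MellinHolomorphic f σ) (hs : s.re = σ) :
    DifferentiableOn ℂ (fun w : ℂ => mellin (fun x : ℝ => f (w * x)) s) {w | 0 < w.re} := by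
  intro w (hw : 0 < w.re)
  obtain ⟨g, hg, hfg⟩ := hf.exists_norm_deriv_le hw
  have hpos : ∀ᶠ v : ℂ in 𝓝 w, 0 < v.re := isOpen_setOf_re_pos.mem_nhds hw
  refine (hasDerivAt_integral_of_dominated_loc_of_deriv_le (hfg.and hpos)
    (F := fun (v : ℂ) (x : ℝ) => (x : ℂ) ^ (s - 1) • f (v * x))
    (F' := fun (v : ℂ) (x : ℝ) => (x : ℂ) ^ (s - 1) • (x : ℂ) • deriv f (v * x))
    ?_ (hf.mellinConvergent hs hw) ?_ ?_ hg ?_).2.differentiableAt.differentiableWithinAt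
  · filter_upwards [hpos] with v hv
    exact aestronglyMeasurable_cpow_smul
      (continuousOn_comp_mul_ofReal hf.differentiableOn.continuousOn hv) s
  · have hderiv : ContinuousOn (deriv f) {z | 0 < z.re} :=
      (hf.differentiableOn.deriv isOpen_setOf_re_pos).continuousOn
    exact aestronglyMeasurable_cpow_smul (ContinuousOn.smul (by fun_prop)
      (continuousOn_comp_mul_ofReal hderiv hw)) s
  · filter_upwards [ae_restrict_mem measurableSet_Ioi] with x (hx : 0 < x) v hv
    rw [norm_cpow_sub_one_smul hx, hs]
    gcongr
    exact hv.1 x hx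
  · filter_upwards [ae_restrict_mem measurableSet_Ioi] with x (hx : 0 < x) v hv
    exact (hasDerivAt_comp_mul_ofReal hf.differentiableOn hv.2 hx).const_smul _

lemma mellin_comp_mul (hf : MellinHolomorphic f σ) (hs : s.re = σ) (hw : 0 < w.re) :
    mellin (fun x : ℝ => f (w * x)) s = w ^ (-s) • mellin (fun x : ℝ => f x) s := by
  have hcpow : DifferentiableOn ℂ (fun w : ℂ => w ^ (-s) • mellin (fun x : ℝ => f x) s)
      {w | 0 < w.re} := fun v hv =>
    ((differentiableAt_id.cpow_const (.inl hv)).smul_const _).differentiableWithinAt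
  refine ((hf.differentiableOn_mellin hs).analyticOnNhd
    isOpen_setOf_re_pos).eqOn_of_preconnected_of_frequently_eq
    (hcpow.analyticOnNhd isOpen_setOf_re_pos) (convex_halfSpace_re_gt 0).isPreconnected
    (z₀ := 1) (by simp) ?_ hw
  have hreal : ∀ᶠ r : ℝ in 𝓝[≠] 1,
      mellin (fun x : ℝ => f (r * x)) s = (r : ℂ) ^ (-s) • mellin (fun x : ℝ => f x) s := by
    filter_upwards [nhdsWithin_le_nhds (lt_mem_nhds one_pos)] with r hr
    simpa using mellin_comp_mul_left (fun x : ℝ => f x) s hr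
  have hofReal : Tendsto ((↑) : ℝ → ℂ) (𝓝[≠] 1) (𝓝[≠] 1) :=
    continuous_ofReal.continuousWithinAt.tendsto_nhdsWithin fun r hr => by simpa using hr
  exact hofReal.frequently hreal.frequently

lemma exists_exp_mul_norm_mellin_le (hf : MellinHolomorphic f σ) {θ : ℝ} (hθ : |θ| < Real.pi / 2) :
    ∃ K : ℝ, ∀ t : ℝ, Real.exp (θ * t) * ‖mellin (fun x : ℝ => f x) (σ + t * I)‖ ≤ K := by
  set w : ℂ := cexp (θ * I) with hw
  have harg : w.arg = θ := by
    rw [hw, arg_exp_mul_I, toIocMod_eq_self]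
    constructor <;> linarith [abs_lt.1 hθ, Real.pi_pos]
  have hre : 0 < w.re := by
    rw [← harg, abs_arg_lt_pi_div_two_iff] at hθ
    exact hθ.resolve_right (exp_ne_zero _)
  refine ⟨∫ x in Ioi (0 : ℝ), x ^ (σ - 1) * ‖f (w * x)‖, fun t => ?_⟩
  have hs : (σ + t * I : ℂ).re = σ := by simp
  calc Real.exp (θ * t) * ‖mellin (fun x : ℝ => f x) (σ + t * I)‖
      = ‖mellin (fun x : ℝ => f (w * x)) (σ + t * I)‖ := by
        rw [hf.mellin_comp_mul hs hre, norm_smul, norm_cpow_neg_vertical (exp_ne_zero _), harg,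
          norm_exp_ofReal_mul_I, Real.one_rpow, one_mul]
    _ ≤ ∫ x in Ioi (0 : ℝ), x ^ (σ - 1) * ‖f (w * x)‖ := by
        simpa only [hs] using norm_mellin_le (fun x : ℝ => f (w * x)) (σ + t * I)

lemma exists_norm_mellin_le (hf : MellinHolomorphic f σ) {θ : ℝ} (hθ : |θ| < Real.pi / 2) :
    ∃ K : ℝ, ∀ t : ℝ,
      ‖mellin (fun x : ℝ => f x) (σ + t * I)‖ ≤ K * Real.exp (-(θ * |t|)) := by
  obtain ⟨K₁, hK₁⟩ := hf.exists_exp_mul_norm_mellin_le hθ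
  obtain ⟨K₂, hK₂⟩ := hf.exists_exp_mul_norm_mellin_le (θ := -θ) (by rwa [abs_neg])
  refine ⟨max K₁ K₂, fun t => ?_⟩
  rw [Real.exp_neg, ← div_eq_mul_inv, le_div_iff₀' (Real.exp_pos _)]
  rcases abs_cases t with ⟨ht, -⟩ | ⟨ht, -⟩ <;> rw [ht]
  · exact (hK₁ t).trans (le_max_left _ _)
  · simpa using (hK₂ t).trans (le_max_right _ _)

lemma verticalIntegrable (hf : MellinHolomorphic f σ) (hw : 0 < w.re) :
    VerticalIntegrable (mellin fun x : ℝ => f (w * x)) σ := by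
  have hs : ∀ t : ℝ, (σ + t * I : ℂ).re = σ := by simp
  obtain ⟨θ, hwθ, hθ⟩ := exists_between (abs_arg_lt_pi_div_two_iff.2 (.inl hw))
  have hθ₀ : 0 ≤ θ := (abs_nonneg _).trans hwθ.le
  obtain ⟨K, hK⟩ := hf.exists_norm_mellin_le (θ := θ) (by rwa [abs_of_nonneg hθ₀])
  refine ((integrable_exp_neg_mul_abs (sub_pos.2 hwθ)).const_mul (‖w‖ ^ (-σ) * K)).mono'
    (continuous_mellin_vertical fun t => hf.mellinConvergent (hs t) hw).aestronglyMeasurable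
    (.of_forall fun t => ?_)
  have harg : w.arg * t ≤ |w.arg| * |t| := (le_abs_self _).trans_eq (abs_mul _ _)
  calc ‖mellin (fun x : ℝ => f (w * x)) (σ + t * I)‖
      = ‖w‖ ^ (-σ) * Real.exp (w.arg * t) * ‖mellin (fun x : ℝ => f x) (σ + t * I)‖ := by
        rw [hf.mellin_comp_mul (hs t) hw, norm_smul,
          norm_cpow_neg_vertical (ne_of_apply_ne re hw.ne')]
    _ ≤ ‖w‖ ^ (-σ) * Real.exp (|w.arg| * |t|) * (K * Real.exp (-(θ * |t|))) := by
        gcongr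
        exact hK t
    _ = ‖w‖ ^ (-σ) * K * Real.exp (-((θ - |w.arg|) * |t|)) := by
        rw [show -((θ - |w.arg|) * |t|) = |w.arg| * |t| + -(θ * |t|) by ring, Real.exp_add]
        ring

theorem mellin_inversion (hf : MellinHolomorphic f σ) (hw : 0 < w.re) :
    (1 / (2 * Real.pi)) • ∫ t : ℝ,
      w ^ (-(σ + t * I) : ℂ) • mellin (fun x : ℝ => f x) (σ + t * I) = f w := by
  have hs : ∀ t : ℝ, (σ + t * I : ℂ).re = σ := by simp
  have hcont : ContinuousAt (fun x : ℝ => f (w * x)) 1 :=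
    (continuousOn_comp_mul_ofReal hf.differentiableOn.continuousOn hw).continuousAt
      (Ioi_mem_nhds one_pos)
  have hinv := mellinInv_mellin_eq σ (fun x : ℝ => f (w * x)) one_pos
    (hf.mellinConvergent (ofReal_re σ) hw) (hf.verticalIntegrable hw) hcont
  simpa [mellinInv, fun t => hf.mellin_comp_mul (hs t) hw] using hinv

end MellinHolomorphic

end RightHalfPlane

section PolarPart

variable {f : ℝ → ℂ} {a C s : ℂ} {b d : ℝ}

lemma hasMellin_one_Ioi (hs : s.re < 0) :
    HasMellin (indicator (Ioi 1) (fun _ => 1 : ℝ → ℂ)) s (-1 / s) := by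
  have hre : (s - 1).re < -1 := by rw [sub_re, one_re]; linarith
  have hsub : Ioi (1 : ℝ) ⊆ Ioi 0 := Ioi_subset_Ioi zero_le_one
  simp_rw [HasMellin, mellin, MellinConvergent, ← indicator_smul, IntegrableOn,
    integrable_indicator_iff measurableSet_Ioi, integral_indicator measurableSet_Ioi, IntegrableOn,
    Measure.restrict_restrict_of_subset hsub, smul_eq_mul, mul_one]
  exact ⟨integrableOn_Ioi_cpow_of_lt hre one_pos, by
    simpa using integral_Ioi_cpow_of_lt hre one_pos⟩

lemma hasMellin_cpow_Ioi (hs : s.re + a.re < 0) :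
    HasMellin (indicator (Ioi 1) (fun t => ↑t ^ a : ℝ → ℂ)) s (-1 / (s + a)) := by
  have := hasMellin_one_Ioi (by rwa [add_re] : (s + a).re < 0)
  simp_rw [HasMellin, ← MellinConvergent.cpow_smul, ← mellin_cpow_smul, ← indicator_smul,
    smul_eq_mul, mul_one] at this
  exact this

/-- The function `f` minus `C x⁻ᵃ`, its polar part at `0`, on `(0, 1]` only, so that the behaviour
of `f` at infinity is unaffected. -/
noncomputable def subPolarPart (f : ℝ → ℂ) (a C : ℂ) (x : ℝ) : ℂ :=
  f x - C * indicator (Ioc 0 1) (fun t : ℝ => (t : ℂ) ^ (-a)) x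

lemma locallyIntegrableOn_subPolarPart (hf : LocallyIntegrableOn f (Ioi 0)) :
    LocallyIntegrableOn (subPolarPart f a C) (Ioi 0) := by
  have hpow : LocallyIntegrableOn (fun x : ℝ => C * (x : ℂ) ^ (-a)) (Ioi 0) :=
    ContinuousOn.locallyIntegrableOn (fun x hx => (continuousAt_const.mul
      (continuousAt_ofReal_cpow_const x (-a) (.inr (ne_of_gt hx)))).continuousWithinAt)
      measurableSet_Ioi
  have hsub : subPolarPart f a C = f - indicator (Ioc 0 1) fun x : ℝ => C * (x : ℂ) ^ (-a) := by
    funext x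
    simp [subPolarPart, indicator_apply]
  rw [hsub]
  refine hf.sub fun x hx => ?_
  obtain ⟨u, hu, hpow_u⟩ := hpow x hx
  exact ⟨u, hu, hpow_u.indicator measurableSet_Ioc⟩

lemma isBigO_subPolarPart_atTop (hf : f =O[atTop] (· ^ (-d) : ℝ → ℝ)) :
    subPolarPart f a C =O[atTop] (· ^ (-d) : ℝ → ℝ) := by
  refine hf.congr' ?_ .rfl
  filter_upwards [eventually_gt_atTop 1] with x hx
  simp [subPolarPart, hx]

lemma isBigO_subPolarPart_zero
    (hf : (fun x : ℝ => f x - C * (x : ℂ) ^ (-a)) =O[𝓝[>] 0] (· ^ (-b) : ℝ → ℝ)) :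
    subPolarPart f a C =O[𝓝[>] 0] (· ^ (-b) : ℝ → ℝ) := by
  refine hf.congr' ?_ .rfl
  filter_upwards [Ioc_mem_nhdsGT one_pos] with x hx
  simp [subPolarPart, hx.1, hx.2]

lemma mellin_eq_mellin_subPolarPart_add (hf : MellinConvergent (subPolarPart f a C) s)
    (hs : a.re < s.re) : mellin f s = mellin (subPolarPart f a C) s + C / (s - a) := by
  have hpow := hasMellin_cpow_Ioc (-a) (s := s) (by simpa using hs)
  have hpowC := hasMellin_const_smul hpow.1 C
  rw [hpow.2] at hpowC
  have h := (hasMellin_add hf hpowC.1).2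
  rw [hpowC.2] at h
  convert h using 2
  · simp [subPolarPart]
  · simp [div_eq_mul_inv, sub_eq_add_neg]

lemma mellin_sub_cpow_eq_mellin_subPolarPart_add (hf : MellinConvergent (subPolarPart f a C) s)
    (hs : s.re < a.re) : mellin (fun x : ℝ => f x - C * (x : ℂ) ^ (-a)) s =
      mellin (subPolarPart f a C) s + C / (s - a) := by
  have hpow := hasMellin_cpow_Ioi (a := -a) (s := s) (by simpa using hs)
  have hpowC := hasMellin_const_smul hpow.1 C
  rw [hpow.2] at hpowC
  have h := (hasMellin_sub hf hpowC.1).2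
  rw [hpowC.2] at h
  convert h using 1
  · refine setIntegral_congr_fun measurableSet_Ioi fun x (hx : 0 < x) => ?_
    by_cases hx1 : x ≤ 1
    · simp [subPolarPart, hx, hx1]
    · simp [subPolarPart, hx1, not_le.1 hx1]
  · simp [div_eq_mul_inv, sub_eq_add_neg]

-- Stated with the factor `s - a` so that the identity theorem applies on the whole strip
-- `b < Re s < d`, with no puncture at the pole `s = a`.
lemma sub_mul_mellin_sub_cpow_eq {G : ℂ → ℂ} (had : a.re < d)
    (hf : LocallyIntegrableOn f (Ioi 0)) (hf_top : f =O[atTop] (· ^ (-d) : ℝ → ℝ))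
    (hf_zero : (fun x : ℝ => f x - C * (x : ℂ) ^ (-a)) =O[𝓝[>] 0] (· ^ (-b) : ℝ → ℝ))
    (hG : DifferentiableOn ℂ G (re ⁻¹' Ioo b d))
    (hfG : ∀ z : ℂ, a.re < z.re → z.re < d → (z - a) * mellin f z = G z)
    (hbs : b < s.re) (hsa : s.re < a.re) :
    (s - a) * mellin (fun x : ℝ => f x - C * (x : ℂ) ^ (-a)) s = G s := by
  have hba : b < a.re := hbs.trans hsa
  have hlocint := locallyIntegrableOn_subPolarPart (a := a) (C := C) hf
  have htop := isBigO_subPolarPart_atTop (a := a) (C := C) hf_top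
  have hzero := isBigO_subPolarPart_zero hf_zero
  have hopen : IsOpen (re ⁻¹' Ioo b d) := isOpen_Ioo.preimage continuous_re
  have hconv : ∀ z ∈ re ⁻¹' Ioo b d, MellinConvergent (subPolarPart f a C) z := fun z hz =>
    mellinConvergent_of_isBigO_rpow hlocint htop hz.2 hzero hz.1
  have hH : DifferentiableOn ℂ (fun z => (z - a) * mellin (subPolarPart f a C) z + C)
      (re ⁻¹' Ioo b d) := fun z hz => DifferentiableAt.differentiableWithinAt <|
    ((differentiableAt_id.sub_const a).mul (mellin_differentiableAt_of_isBigO_rpow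
      hlocint htop hz.2 hzero hz.1)).add_const C
  have hcancel : ∀ {z m : ℂ}, z.re ≠ a.re → (z - a) * (m + C / (z - a)) = (z - a) * m + C :=
    fun hza => by rw [mul_add, mul_div_cancel₀ _ (sub_ne_zero.2 (ne_of_apply_ne re hza))]
  have hHG : EqOn (fun z => (z - a) * mellin (subPolarPart f a C) z + C) G (re ⁻¹' Ioo b d) := by
    obtain ⟨r, har, hrd⟩ := exists_between had
    refine (hH.analyticOnNhd hopen).eqOn_of_preconnected_of_eventuallyEq (hG.analyticOnNhd hopen)
      ((convex_Ioo b d).is_linear_preimage reLm.isLinear).isPreconnected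
      (z₀ := r) ⟨hba.trans har, hrd⟩ ?_
    filter_upwards [(isOpen_Ioo.preimage continuous_re).mem_nhds
      (show (r : ℂ) ∈ re ⁻¹' Ioo a.re d from ⟨har, hrd⟩)] with z hz
    rw [← hfG z hz.1 hz.2, mellin_eq_mellin_subPolarPart_add
      (hconv z ⟨hba.trans hz.1, hz.2⟩) hz.1, hcancel hz.1.ne']
  have hs : s ∈ re ⁻¹' Ioo b d := ⟨hbs, hsa.trans had⟩
  rw [mellin_sub_cpow_eq_mellin_subPolarPart_add (hconv s hs) hsa, hcancel hsa.ne]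
  exact hHG hs

end PolarPart

section BoseKernel

variable {s w z : ℂ} {σ : ℝ}

/-- The Bose–Einstein kernel `1 / (eᶻ - 1)` without its pole at the origin. -/
noncomputable def boseKernel (z : ℂ) : ℂ := 1 / (cexp z - 1) - 1 / z

lemma re_le_norm_exp_sub_one (z : ℂ) : z.re ≤ ‖cexp z - 1‖ := by
  have h := norm_sub_norm_le (cexp z) 1
  rw [norm_exp, norm_one] at h
  linarith [Real.add_one_le_exp z.re]

lemma exp_sub_one_ne_zero (hz : 0 < z.re) : cexp z - 1 ≠ 0 :=
  norm_pos_iff.1 (hz.trans_le (re_le_norm_exp_sub_one z))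

lemma differentiableOn_boseKernel : DifferentiableOn ℂ boseKernel {z | 0 < z.re} := by
  unfold boseKernel
  refine .sub (.div (by fun_prop) (by fun_prop) fun z hz => exp_sub_one_ne_zero hz)
    (.div (by fun_prop) (by fun_prop) fun z hz => ne_of_apply_ne re (ne_of_gt hz))

lemma norm_boseKernel_le_two_div_re (hz : 0 < z.re) : ‖boseKernel z‖ ≤ 2 / z.re := by
  calc ‖boseKernel z‖ ≤ 1 / ‖cexp z - 1‖ + 1 / ‖z‖ := by
        simpa only [boseKernel, norm_div, norm_one] using norm_sub_le (1 / (cexp z - 1)) (1 / z)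
    _ ≤ 1 / z.re + 1 / z.re := by
        gcongr
        · exact re_le_norm_exp_sub_one z
        · exact re_le_norm z
    _ = 2 / z.re := by ring

lemma norm_boseKernel_le_two (hz : ‖z‖ ≤ 1 / 2) : ‖boseKernel z‖ ≤ 2 := by
  rcases eq_or_ne z 0 with rfl | hz0
  · simp [boseKernel]
  have hzpos : 0 < ‖z‖ := norm_pos_iff.2 hz0
  have hquad : ‖cexp z - 1 - z‖ ≤ ‖z‖ ^ 2 := norm_exp_sub_one_sub_id_le (by linarith)
  have hlower : ‖z‖ / 2 ≤ ‖cexp z - 1‖ := by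
    have htri := norm_sub_norm_le z (z - (cexp z - 1))
    rw [sub_sub_cancel, norm_sub_rev z] at htri
    nlinarith
  have hne : cexp z - 1 ≠ 0 := norm_pos_iff.1 (by linarith)
  rw [boseKernel, div_sub_div _ _ hne hz0, one_mul, mul_one, norm_div, norm_mul, norm_sub_rev,
    div_le_iff₀ (by positivity)]
  nlinarith

lemma norm_boseKernel_le (hz : 0 < z.re) : ‖boseKernel z‖ ≤ 2 + 4 * (‖z‖ / z.re) := by
  rcases le_total ‖z‖ (1 / 2) with hsmall | hlarge
  · exact (norm_boseKernel_le_two hsmall).trans (le_add_of_nonneg_right (by positivity))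
  · calc ‖boseKernel z‖ ≤ 2 / z.re := norm_boseKernel_le_two_div_re hz
      _ ≤ 4 * ‖z‖ / z.re := by gcongr; linarith
      _ ≤ 2 + 4 * (‖z‖ / z.re) := by rw [mul_div_assoc]; linarith

lemma norm_boseKernel_mul_ofReal_le (hw : 0 < w.re) {x : ℝ} (hx : 0 < x) :
    ‖boseKernel (w * x)‖ ≤ (2 + 4 * (‖w‖ / w.re) + 2 / w.re) * min 1 x⁻¹ := by
  have hre : (w * x).re = w.re * x := by simp
  have hnorm : ‖w * x‖ = ‖w‖ * x := by simp [abs_of_pos hx]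
  have hbounded := norm_boseKernel_le (re_mul_ofReal_pos hw hx)
  have hdecay := norm_boseKernel_le_two_div_re (re_mul_ofReal_pos hw hx)
  rw [hre, hnorm, mul_div_mul_right _ _ hx.ne'] at hbounded
  rw [hre, ← div_div, div_eq_mul_inv _ x] at hdecay
  rw [mul_min_of_nonneg _ _ (by positivity), mul_one]
  refine le_min (hbounded.trans (le_add_of_nonneg_right (by positivity))) (hdecay.trans ?_)
  gcongr
  exact le_add_of_nonneg_left (by positivity)

lemma integrableOn_rpow_mul_min_one_inv (hσ : 0 < σ) (hσ1 : σ < 1) :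
    IntegrableOn (fun x : ℝ => x ^ (σ - 1) * min 1 x⁻¹) (Ioi 0) := by
  have hcont : ContinuousOn (fun x : ℝ => min 1 x⁻¹) (Ioi 0) :=
    continuousOn_const.inf (continuousOn_inv₀.mono fun x hx => ne_of_gt hx)
  refine mellin_convergent_of_isBigO_scalar (hcont.locallyIntegrableOn measurableSet_Ioi)
    (a := 1) (b := 0) (.of_bound 1 ?_) hσ1 (.of_bound 1 ?_) hσ
  · filter_upwards [eventually_gt_atTop 0] with x hx
    rw [one_mul, Real.rpow_neg_one, norm_inv, Real.norm_of_nonneg (by positivity),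
      Real.norm_of_nonneg hx.le]
    exact min_le_right _ _
  · filter_upwards [self_mem_nhdsWithin] with x (hx : 0 < x)
    rw [Real.norm_of_nonneg (by positivity)]
    simp

lemma mellinHolomorphic_boseKernel (hσ : 0 < σ) (hσ1 : σ < 1) :
    MellinHolomorphic boseKernel σ where
  differentiableOn := differentiableOn_boseKernel
  exists_dominating w hw := by
    let M : ℂ → ℝ := fun v => 2 + 4 * (‖v‖ / v.re) + 2 / v.re
    have hM : ContinuousAt M w := by
      fun_prop (disch := exact hw.ne')
    refine ⟨fun x => (M w + 1) * min 1 x⁻¹, ?_, ?_⟩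
    · simpa only [IntegrableOn, mul_left_comm] using
        (integrableOn_rpow_mul_min_one_inv hσ hσ1).const_mul (M w + 1)
    · filter_upwards [isOpen_setOf_re_pos.mem_nhds hw,
        hM.eventually_le_const (lt_add_one (M w))] with v hv hMv x hx
      refine (norm_boseKernel_mul_ofReal_le hv hx).trans ?_
      gcongr

lemma hasSum_exp_neg_mul (hz : 0 < z.re) :
    HasSum (fun n : ℕ => cexp (-(n + 1) * z)) (1 / (cexp z - 1)) := by
  have hq : ‖cexp (-z)‖ < 1 := by simpa [norm_exp] using hz
  have hlim : cexp (-z) * (1 - cexp (-z))⁻¹ = 1 / (cexp z - 1) := by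
    rw [Complex.exp_neg, ← mul_inv_rev, sub_mul, one_mul, inv_mul_cancel₀ (exp_ne_zero z), one_div]
  rw [← hlim]
  refine ((hasSum_geometric_of_norm_lt_one hq).mul_left (cexp (-z))).congr_fun fun n => ?_
  rw [← Complex.exp_nat_mul, ← Complex.exp_add]
  ring_nf

lemma mellin_one_div_exp_sub_one (hs : 1 < s.re) :
    mellin (fun x : ℝ => 1 / (cexp x - 1)) s = Gamma s * riemannZeta s := by
  have hseries : ∀ x ∈ Ioi (0 : ℝ), HasSum
      (fun n : ℕ => (1 : ℂ) * Real.exp (-(n + 1 : ℝ) * x)) (1 / (cexp x - 1)) := fun x hx => by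
    simpa using hasSum_exp_neg_mul (z := x) (by simpa using hx)
  have hsummable : Summable fun n : ℕ => ‖(1 : ℂ)‖ / (n + 1 : ℝ) ^ s.re := by
    simpa using (summable_nat_add_iff 1).2 (Real.summable_one_div_nat_rpow.2 hs)
  have hsum := hasSum_mellin (fun n => .inr n.cast_add_one_pos) (one_pos.trans hs) hseries hsummable
  rw [← hsum.tsum_eq, zeta_eq_tsum_one_div_nat_add_one_cpow hs, ← tsum_mul_left]
  push_cast
  simp only [mul_div_assoc]

lemma isBigO_one_div_exp_sub_one_atTop :
    (fun x : ℝ => 1 / (cexp x - 1)) =O[atTop] (· ^ (-2 : ℝ) : ℝ → ℝ) := by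
  refine .of_bound 2 ?_
  filter_upwards [eventually_gt_atTop 0] with x hx
  have hquad : x ^ 2 / 2 ≤ ‖cexp x - 1‖ := by
    have h := Real.quadratic_le_exp_of_nonneg hx.le
    have hnorm := norm_sub_norm_le (cexp x) 1
    rw [norm_exp_ofReal, norm_one] at hnorm
    linarith
  calc ‖1 / (cexp x - 1)‖ = 1 / ‖cexp x - 1‖ := by rw [norm_div, norm_one]
    _ ≤ 1 / (x ^ 2 / 2) := by gcongr
    _ = 2 * ‖x ^ (-2 : ℝ)‖ := by
        rw [Real.norm_of_nonneg (by positivity), Real.rpow_neg hx.le, Real.rpow_two]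
        field_simp

lemma ne_neg_natCast_of_re_pos (hs : 0 < s.re) (n : ℕ) : s ≠ -n := by
  rintro rfl
  simp only [neg_re, natCast_re, Left.neg_pos_iff] at hs
  exact hs.not_ge n.cast_nonneg

lemma mellin_boseKernel (hs : 0 < s.re) (hs1 : s.re < 1) :
    mellin (fun x : ℝ => boseKernel x) s = Gamma s * riemannZeta s := by
  have hcont : ContinuousOn (fun x : ℝ => 1 / (cexp x - 1)) (Ioi 0) :=
    .div (by fun_prop) (by fun_prop) fun x hx => exp_sub_one_ne_zero (by simpa using hx)
  have hker : (fun x : ℝ => boseKernel x) =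
      fun x : ℝ => 1 / (cexp x - 1) - 1 * (x : ℂ) ^ (-1 : ℂ) := by
    simp [boseKernel, cpow_neg_one]
  have hbdd : (fun x : ℝ => boseKernel x) =O[𝓝[>] 0] (· ^ (-0 : ℝ) : ℝ → ℝ) := by
    refine .of_bound 2 ?_
    filter_upwards [Ioc_mem_nhdsGT one_half_pos] with x hx
    simpa using norm_boseKernel_le_two (z := x) (by simpa [abs_of_pos hx.1] using hx.2)
  have hGamma : DifferentiableOn ℂ (fun z => Gamma z * riemannZeta₁ z) (re ⁻¹' Ioo 0 2) :=
    fun z hz => ((differentiableAt_Gamma z (ne_neg_natCast_of_re_pos hz.1)).mul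
      (differentiable_riemannZeta₁ z)).differentiableWithinAt
  have hs_ne : s ≠ 1 := ne_of_apply_ne re hs1.ne
  have hpole := sub_mul_mellin_sub_cpow_eq (a := 1) (C := 1) (b := 0) (d := 2) (by simp)
    (hcont.locallyIntegrableOn measurableSet_Ioi) isBigO_one_div_exp_sub_one_atTop
    (hker ▸ hbdd) hGamma (fun z hz _ => ?_) hs hs1
  · rw [hker, riemannZeta_eq_inv_sub_mul hs_ne, eq_comm, mul_left_comm, ← hpole,
      inv_mul_cancel_left₀ (sub_ne_zero.2 hs_ne)]
  · rw [mellin_one_div_exp_sub_one hz,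
      riemannZeta_eq_inv_sub_mul (ne_of_apply_ne re (ne_of_gt hz)), mul_left_comm,
      mul_inv_cancel_left₀ (sub_ne_zero.2 (ne_of_apply_ne re (ne_of_gt hz)))]

end BoseKernel

section Integrand

variable {s : ℂ}

lemma cos_pi_mul_div_two_ne_zero (hs : 0 < s.re) (hs1 : s.re < 1) :
    Complex.cos (Real.pi * s / 2) ≠ 0 := by
  rw [Complex.cos_ne_zero_iff]
  intro k hk
  have hodd : s = ((2 * k + 1 : ℤ) : ℝ) := by
    apply mul_left_cancel₀ (ofReal_ne_zero.2 Real.pi_ne_zero)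
    push_cast
    linear_combination 2 * hk
  rw [hodd, ofReal_re] at hs hs1
  have hpos : 0 < 2 * k + 1 := mod_cast hs
  have hlt : 2 * k + 1 < 1 := mod_cast hs1
  omega

lemma riemannZeta_one_sub_div_cos (hs : 0 < s.re) (hs1 : s.re < 1) :
    riemannZeta (1 - s) / (2 * Complex.cos (Real.pi * s / 2)) =
      (2 * Real.pi : ℂ) ^ (-s) * (Gamma s * riemannZeta s) := by
  rw [riemannZeta_one_sub (ne_neg_natCast_of_re_pos hs) (ne_of_apply_ne re hs1.ne),
    div_eq_iff (mul_ne_zero two_ne_zero (cos_pi_mul_div_two_ne_zero hs hs1))]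
  ring

end Integrand

theorem stmt13 (w : ℂ) (hw : 0 < w.re) (c : ℝ) (hc : 0 < c) (hc1 : c < 1) :
    (1 / (2 * (Real.pi : ℂ))) * (∫ t : ℝ,
        ((Real.pi : ℂ) ^ 2 * riemannZeta (1 - ((c : ℂ) + (t : ℂ) * Complex.I))
            / (2 * Complex.cos ((Real.pi : ℂ) * ((c : ℂ) + (t : ℂ) * Complex.I) / 2)))
          * w ^ (-((c : ℂ) + (t : ℂ) * Complex.I))) =
      (Real.pi : ℂ) ^ 2 * (1 / (Complex.exp (2 * (Real.pi : ℂ) * w) - 1)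
        - 1 / (2 * (Real.pi : ℂ) * w)) := by
  have hintegrand : ∀ t : ℝ,
      (Real.pi : ℂ) ^ 2 * riemannZeta (1 - (c + t * I)) /
          (2 * Complex.cos (Real.pi * (c + t * I) / 2)) * w ^ (-(c + t * I)) =
        Real.pi ^ 2 * ((((2 * Real.pi : ℝ) : ℂ) * w) ^ (-(c + t * I)) *
          mellin (fun x : ℝ => boseKernel x) (c + t * I)) := fun t => by
    have hs : 0 < (c + t * I).re := by simpa
    have hs1 : (c + t * I).re < 1 := by simpa
    rw [mul_div_assoc, riemannZeta_one_sub_div_cos hs hs1, mellin_boseKernel hs hs1,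
      ofReal_mul_cpow Real.two_pi_pos (ne_of_apply_ne re hw.ne')]
    push_cast
    ring
  have hinv := (mellinHolomorphic_boseKernel hc hc1).mellin_inversion
    (w := ((2 * Real.pi : ℝ) : ℂ) * w) (by rw [re_ofReal_mul]; positivity)
  simp_rw [hintegrand, integral_const_mul]
  change _ = (Real.pi : ℂ) ^ 2 * boseKernel (2 * Real.pi * w)
  simp only [real_smul, smul_eq_mul] at hinv
  push_cast at hinv ⊢
  linear_combination (Real.pi : ℂ) ^ 2 * hinv
end

section
/- Let y ∈ ℂ with Re(y) > 0 and let c > 1. Then Σ_{n=1}^∞ d(n) log(n) e^{−ny} = −2 · (1/(2πi)) ∫_{(c)} Γ(s) ζ(s) ζ'(s) y^{−s} ds. -/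
open Filter Topology MeasureTheory

/-!
For `0 < Re y`, the function `x ↦ exp (-y x)` has Mellin transform `Γ(s) y ^ (-s)`: this is Euler's
integral for real `y`, and both sides are holomorphic in `y`. Applying it at `s + 2` and dividing
by `s (s + 1)` shows that `Γ(s) y ^ (-s)` is `O(|s| ^ (-2))` on vertical lines. Hence Mellin
inversion recovers `exp (-n y)`, and integrating an absolutely convergent Dirichlet series `L(a, s)`
against `Γ(s) y ^ (-s)` term by term gives `∑ a(n) exp (-n y)`. For `a(n) = d(n) log n` the series
is `-(ζ²)' = -2 ζ ζ'`.
-/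

open Set

section CahenMellin

variable {s y : ℂ} {c : ℝ}

lemma norm_exp_neg_mul_ofReal (y : ℂ) (t : ℝ) :
    ‖Complex.exp (-(y * t))‖ = Real.exp (-y.re * t) := by
  simp [Complex.norm_exp]

lemma mellinConvergent_exp_neg_mul (hs : 0 < s.re) (hy : 0 < y.re) :
    MellinConvergent (fun t : ℝ ↦ Complex.exp (-(y * t))) s := by
  have hcont : Continuous fun t : ℝ ↦ Complex.exp (-(y * t)) := by fun_prop
  refine mellinConvergent_of_isBigO_rpow_exp (b := 0) hy
    (hcont.locallyIntegrable.locallyIntegrableOn _) ?_ ?_ hs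
  · exact Asymptotics.IsBigO.of_norm_le fun t ↦ (norm_exp_neg_mul_ofReal y t).le
  · simpa only [neg_zero, Real.rpow_zero] using
      (hcont.continuousAt.tendsto.mono_left nhdsWithin_le_nhds).isBigO_one ℝ

lemma hasDerivAt_mellin_exp_neg_mul (hs : 0 < s.re) (hy : 0 < y.re) :
    HasDerivAt (fun z : ℂ ↦ mellin (fun t : ℝ ↦ Complex.exp (-(z * t))) s)
      (-mellin (fun t : ℝ ↦ Complex.exp (-(y * t))) (s + 1)) y := by
  have hs1 : 0 < (s + 1).re := by simpa using hs.trans (lt_add_one _)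
  have hy2 : 0 < ((y.re / 2 : ℝ) : ℂ).re := by simpa using hy
  have hnhds : {z : ℂ | y.re / 2 < z.re} ∈ 𝓝 y :=
    (isOpen_lt continuous_const Complex.continuous_re).mem_nhds (half_lt_self hy)
  rw [mellin, ← integral_neg]
  refine (hasDerivAt_integral_of_dominated_loc_of_deriv_le
    (μ := volume.restrict (Ioi 0))
    (F := fun z (t : ℝ) ↦ (t : ℂ) ^ (s - 1) • Complex.exp (-(z * t)))
    (F' := fun z (t : ℝ) ↦ -((t : ℂ) ^ (s + 1 - 1) • Complex.exp (-(z * t))))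
    hnhds ?_ (mellinConvergent_exp_neg_mul hs hy)
    (mellinConvergent_exp_neg_mul hs1 hy).neg.aestronglyMeasurable ?_
    (mellinConvergent_exp_neg_mul hs1 hy2).norm ?_).2
  · filter_upwards [hnhds] with z hz
    exact (mellinConvergent_exp_neg_mul hs ((half_pos hy).trans hz)).aestronglyMeasurable
  · filter_upwards [ae_restrict_mem measurableSet_Ioi] with t (ht : 0 < t) z (hz : y.re / 2 < z.re)
    rw [norm_neg, norm_smul, norm_smul, norm_exp_neg_mul_ofReal, norm_exp_neg_mul_ofReal,
      Complex.ofReal_re]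
    gcongr
  · filter_upwards [ae_restrict_mem measurableSet_Ioi] with t (ht : 0 < t) z _
    have hlin : HasDerivAt (fun z : ℂ ↦ -(z * t)) (-(t : ℂ)) z := by
      simpa only [one_mul] using ((hasDerivAt_id' z).mul_const (t : ℂ)).fun_neg
    have hpow : (t : ℂ) ^ (s + 1 - 1) = (t : ℂ) ^ (s - 1) * t := by
      rw [add_sub_right_comm, Complex.cpow_add _ _ (Complex.ofReal_ne_zero.2 ht.ne'),
        Complex.cpow_one]
    convert hlin.cexp.fun_const_smul ((t : ℂ) ^ (s - 1)) using 1
    rw [hpow, smul_eq_mul, smul_eq_mul]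
    ring

lemma eqOn_re_pos_of_eq_ofReal {E : Type*} [NormedAddCommGroup E] [NormedSpace ℂ E]
    [CompleteSpace E] {f g : ℂ → E} (hf : DifferentiableOn ℂ f {z | 0 < z.re})
    (hg : DifferentiableOn ℂ g {z | 0 < z.re}) (hfg : ∀ x : ℝ, 0 < x → f x = g x) :
    EqOn f g {z | 0 < z.re} := by
  have hU : IsOpen {z : ℂ | 0 < z.re} := isOpen_lt continuous_const Complex.continuous_re
  refine (hf.analyticOnNhd hU).eqOn_of_preconnected_of_frequently_eq (hg.analyticOnNhd hU)
    (convex_halfSpace_re_gt 0).isPreconnected (z₀ := ((1 : ℝ) : ℂ)) (by simp) ?_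
  have htendsto : Tendsto (fun x : ℝ ↦ (x : ℂ)) (𝓝[≠] 1) (𝓝[≠] ((1 : ℝ) : ℂ)) :=
    Complex.continuous_ofReal.continuousAt.continuousWithinAt.tendsto_nhdsWithin
      fun x hx ↦ Complex.ofReal_injective.ne hx
  refine htendsto.frequently (Eventually.frequently ?_)
  filter_upwards [nhdsWithin_le_nhds (lt_mem_nhds one_pos)] with x hx using hfg x hx

theorem mellin_exp_neg_mul (hs : 0 < s.re) (hy : 0 < y.re) :
    mellin (fun t : ℝ ↦ Complex.exp (-(y * t))) s = Complex.Gamma s * y ^ (-s) := by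
  refine eqOn_re_pos_of_eq_ofReal
    (f := fun y ↦ mellin (fun t : ℝ ↦ Complex.exp (-(y * t))) s)
    (g := fun y ↦ Complex.Gamma s * y ^ (-s))
    (fun z hz ↦ (hasDerivAt_mellin_exp_neg_mul hs hz).differentiableAt.differentiableWithinAt)
    (fun z hz ↦ ?_) (fun x hx ↦ ?_) hy
  · exact ((differentiableAt_id.cpow_const (Or.inl hz)).const_mul _).differentiableWithinAt
  · have harg : (x : ℂ).arg ≠ Real.pi := by
      rw [Complex.arg_ofReal_of_nonneg hx.le]
      exact Real.pi_ne_zero.symm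
    simp only [mellin, smul_eq_mul]
    rw [Complex.integral_cpow_mul_exp_neg_mul_Ioi hs hx, one_div, Complex.inv_cpow _ _ harg,
      Complex.cpow_neg, mul_comm]

lemma norm_Gamma_mul_cpow_neg_le (hs : 0 < s.re) (hy : 0 < y.re) :
    ‖Complex.Gamma s * y ^ (-s)‖ ≤ (1 / y.re) ^ s.re * Real.Gamma s.re := by
  rw [← mellin_exp_neg_mul hs hy, ← Real.integral_rpow_mul_exp_neg_mul_Ioi hs hy]
  refine (norm_integral_le_integral_norm _).trans_eq
    (setIntegral_congr_fun measurableSet_Ioi fun t (ht : 0 < t) ↦ ?_)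
  simp only [norm_smul, norm_exp_neg_mul_ofReal, Complex.norm_cpow_eq_rpow_re_of_pos ht,
    Complex.sub_re, Complex.one_re, neg_mul]

lemma norm_sq_le_norm_mul_add_one (hs : 0 ≤ s.re) : ‖s‖ ^ 2 ≤ ‖s * (s + 1)‖ := by
  have hle : ‖s‖ ≤ ‖s + 1‖ := by
    refine (sq_le_sq₀ (norm_nonneg _) (norm_nonneg _)).1 ?_
    rw [Complex.sq_norm, Complex.sq_norm, Complex.normSq_add, map_one, map_one, mul_one]
    linarith
  rw [norm_mul, sq]
  gcongr

lemma Gamma_add_two_mul_cpow_neg (hs : 0 < s.re) (hy : y ≠ 0) :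
    Complex.Gamma (s + 2) * y ^ (-(s + 2)) * y ^ 2 =
      s * (s + 1) * (Complex.Gamma s * y ^ (-s)) := by
  have hs0 : s ≠ 0 := Complex.ne_zero_of_re_pos hs
  have hs1 : s + 1 ≠ 0 := Complex.ne_zero_of_re_pos (by simpa using hs.trans (lt_add_one _))
  have hGamma : Complex.Gamma (s + 2) = (s + 1) * (s * Complex.Gamma s) := by
    rw [← Complex.Gamma_add_one s hs0, ← Complex.Gamma_add_one (s + 1) hs1, add_assoc,
      one_add_one_eq_two]
  have hcpow : y ^ (-(s + 2)) * y ^ 2 = y ^ (-s) := by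
    rw [← Complex.cpow_ofNat, ← Complex.cpow_add _ _ hy]
    congr 1
    ring
  rw [mul_assoc, hcpow, hGamma]
  ring

lemma norm_Gamma_mul_cpow_neg_le_div_sq (hs : 0 < s.re) (hy : 0 < y.re) :
    ‖Complex.Gamma s * y ^ (-s)‖ ≤
      (1 / y.re) ^ (s.re + 2) * Real.Gamma (s.re + 2) * ‖y‖ ^ 2 / ‖s‖ ^ 2 := by
  have hy0 : y ≠ 0 := Complex.ne_zero_of_re_pos hy
  have hs0 : s ≠ 0 := Complex.ne_zero_of_re_pos hs
  have hbound := norm_Gamma_mul_cpow_neg_le (s := s + 2)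
    (by rw [Complex.add_re, Complex.re_ofNat]; positivity) hy
  rw [le_div_iff₀ (by positivity), mul_comm]
  calc ‖s‖ ^ 2 * ‖Complex.Gamma s * y ^ (-s)‖
      ≤ ‖s * (s + 1)‖ * ‖Complex.Gamma s * y ^ (-s)‖ := by
        gcongr
        exact norm_sq_le_norm_mul_add_one hs.le
    _ = ‖Complex.Gamma (s + 2) * y ^ (-(s + 2))‖ * ‖y‖ ^ 2 := by
        rw [← norm_mul, ← Gamma_add_two_mul_cpow_neg hs hy0, norm_mul, norm_pow]
    _ ≤ (1 / y.re) ^ (s.re + 2) * Real.Gamma (s.re + 2) * ‖y‖ ^ 2 := by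
        gcongr
        simpa using hbound

lemma integrable_inv_sq_add_sq (hc : c ≠ 0) : Integrable fun t : ℝ ↦ (c ^ 2 + t ^ 2)⁻¹ := by
  refine ((integrable_inv_one_add_sq.comp_div hc).const_mul (c ^ 2)⁻¹).congr (.of_forall fun t ↦ ?_)
  simp only
  rw [← mul_inv, mul_add, mul_one, div_pow, mul_div_cancel₀ _ (pow_ne_zero 2 hc)]

lemma differentiableAt_Gamma_mul_cpow_neg (hs : 0 < s.re) (hy : y ≠ 0) :
    DifferentiableAt ℂ (fun s ↦ Complex.Gamma s * y ^ (-s)) s := by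
  refine (Complex.differentiableAt_Gamma s fun m hm ↦ ?_).mul
    (differentiableAt_id.neg.const_cpow (Or.inl hy))
  simp only [hm, Complex.neg_re, Complex.natCast_re, Left.neg_pos_iff] at hs
  exact hs.not_ge m.cast_nonneg

theorem verticalIntegrable_Gamma_mul_cpow_neg (hc : 0 < c) (hy : 0 < y.re) :
    Complex.VerticalIntegrable (fun s ↦ Complex.Gamma s * y ^ (-s)) c := by
  have hre (t : ℝ) : (c + t * Complex.I : ℂ).re = c := by simp
  have hcont : Continuous fun t : ℝ ↦
      Complex.Gamma (c + t * Complex.I) * y ^ (-(c + t * Complex.I : ℂ)) :=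
    continuous_iff_continuousAt.2 fun t ↦
      (differentiableAt_Gamma_mul_cpow_neg (s := c + t * Complex.I) (by rwa [hre])
        (Complex.ne_zero_of_re_pos hy)).continuousAt.comp
        (f := fun t : ℝ ↦ (c + t * Complex.I : ℂ)) (by fun_prop)
  refine ((integrable_inv_sq_add_sq hc.ne').const_mul
    ((1 / y.re) ^ (c + 2) * Real.Gamma (c + 2) * ‖y‖ ^ 2)).mono'
    hcont.aestronglyMeasurable (.of_forall fun t ↦ ?_)
  convert norm_Gamma_mul_cpow_neg_le_div_sq (s := c + t * Complex.I) (by rwa [hre]) hy using 1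
  rw [hre, Complex.sq_norm (c + t * Complex.I), Complex.normSq_add_mul_I, div_eq_mul_inv _ (_ + _)]

theorem mellinInv_Gamma_mul_cpow_neg (hc : 0 < c) (hy : 0 < y.re) {x : ℝ} (hx : 0 < x) :
    mellinInv c (fun s ↦ Complex.Gamma s * y ^ (-s)) x = Complex.exp (-(y * x)) := by
  have hmellin (t : ℝ) : mellin (fun x : ℝ ↦ Complex.exp (-(y * x))) (c + t * Complex.I) =
      Complex.Gamma (c + t * Complex.I) * y ^ (-(c + t * Complex.I : ℂ)) :=
    mellin_exp_neg_mul (by simpa using hc) hy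
  have hinv := mellinInv_mellin_eq c (fun x : ℝ ↦ Complex.exp (-(y * x))) hx
    (mellinConvergent_exp_neg_mul (by simpa using hc) hy)
    (by simpa only [Complex.VerticalIntegrable, hmellin] using
      verticalIntegrable_Gamma_mul_cpow_neg hc hy)
    (by fun_prop)
  simpa only [mellinInv, hmellin] using hinv

end CahenMellin

section DirichletSeries

variable {E : Type*} [NormedAddCommGroup E] [NormedSpace ℂ E] {a : ℕ → ℂ} {c : ℝ}

lemma continuous_LSeries_term (a : ℕ → ℂ) (n : ℕ) : Continuous fun s ↦ LSeries.term a s n :=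
  continuous_iff_continuousAt.2 fun s ↦ (LSeries.hasDerivAt_term a n s).continuousAt

lemma hasSum_integral_LSeries_term_smul {H : ℝ → E} {μ : Measure ℝ} (hH : Integrable H μ)
    (ha : LSeriesSummable a c) :
    HasSum (fun n ↦ ∫ t : ℝ, LSeries.term a (c + t * Complex.I) n • H t ∂μ)
      (∫ t : ℝ, LSeries a (c + t * Complex.I) • H t ∂μ) := by
  have hnorm (n : ℕ) (t : ℝ) : ‖LSeries.term a (c + t * Complex.I) n‖ = ‖LSeries.term a c n‖ := by
    simp only [LSeries.norm_term_eq, Complex.add_re, Complex.re_ofReal_mul, Complex.I_re, mul_zero,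
      add_zero]
  have hint (n : ℕ) : Integrable (fun t : ℝ ↦ LSeries.term a (c + t * Complex.I) n • H t) μ :=
    hH.bdd_smul ‖LSeries.term a c n‖
      ((continuous_LSeries_term a n).comp (by fun_prop)).aestronglyMeasurable
      (.of_forall fun t ↦ (hnorm n t).le)
  have hsum : Summable fun n ↦ ∫ t : ℝ, ‖LSeries.term a (c + t * Complex.I) n • H t‖ ∂μ := by
    simp only [norm_smul, hnorm, integral_const_mul]
    exact ha.norm.mul_right _
  have hline (t : ℝ) : LSeriesSummable a (c + t * Complex.I) :=
    ha.of_re_le_re (by simp)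
  convert hasSum_integral_of_summable_integral_norm hint hsum using 3 with t
  exact ((hline t).tsum_smul_const (H t)).symm

lemma ofReal_add_mul_I_ne_zero (hc : c ≠ 0) (t : ℝ) : (c + t * Complex.I : ℂ) ≠ 0 :=
  fun h ↦ hc (by simpa using congrArg Complex.re h)

theorem hasSum_smul_mellinInv_natCast {G : ℂ → E}
    (hG : Complex.VerticalIntegrable G c) (hc : c ≠ 0) (ha : LSeriesSummable a c) :
    HasSum (fun n : ℕ ↦ a n • mellinInv c G n) (mellinInv c (fun s ↦ LSeries a s • G s) 1) := by
  have hterm (n : ℕ) (t : ℝ) : LSeries.term a (c + t * Complex.I) n • G (c + t * Complex.I) =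
      a n • (n : ℂ) ^ (-(c + t * Complex.I : ℂ)) • G (c + t * Complex.I) := by
    rw [LSeries.term_of_ne_zero' (ofReal_add_mul_I_ne_zero hc t), div_eq_mul_inv,
      ← Complex.cpow_neg, mul_smul]
  have hsum := (hasSum_integral_LSeries_term_smul hG ha).const_smul (1 / (2 * Real.pi))
  simp only [hterm, integral_smul] at hsum
  simpa only [mellinInv, Complex.ofReal_natCast, Complex.ofReal_one, Complex.one_cpow, one_smul,
    smul_comm (a _)] using hsum

lemma mellinInv_zero_right (hc : c ≠ 0) (G : ℂ → E) : mellinInv c G 0 = 0 := by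
  simp only [mellinInv, Complex.ofReal_zero, zero_smul, integral_zero, smul_zero,
    Complex.zero_cpow (neg_ne_zero.2 (ofReal_add_mul_I_ne_zero hc _))]

theorem hasSum_mul_exp_neg_of_LSeriesSummable {y : ℂ} (hy : 0 < y.re) (hc : 0 < c)
    (ha : LSeriesSummable a c) :
    HasSum (fun n : ℕ ↦ a (n + 1) * Complex.exp (-(y * (n + 1))))
      (mellinInv c (fun s ↦ LSeries a s * (Complex.Gamma s * y ^ (-s))) 1) := by
  have hsum := hasSum_smul_mellinInv_natCast (verticalIntegrable_Gamma_mul_cpow_neg hc hy) hc.ne' ha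
  rw [← hasSum_nat_add_iff' 1, Finset.sum_range_one, Nat.cast_zero, mellinInv_zero_right hc.ne',
    smul_zero, sub_zero] at hsum
  refine hsum.congr_fun fun n ↦ ?_
  rw [mellinInv_Gamma_mul_cpow_neg hc hy (by positivity), smul_eq_mul]
  push_cast
  rfl

end DirichletSeries

section DivisorFunction

variable {s : ℂ}

lemma LSeries_convolution_one_one :
    LSeries.convolution (1 : ℕ → ℂ) 1 = fun n ↦ (n.divisors.card : ℂ) := by
  ext n
  simp [LSeries.convolution_def, ← Nat.map_div_right_divisors]

lemma abscissaOfAbsConv_card_divisors_le_one :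
    LSeries.abscissaOfAbsConv (fun n ↦ (n.divisors.card : ℂ)) ≤ 1 := by
  simpa only [LSeries_convolution_one_one, LSeries.abscissaOfAbsConv_one, max_self] using
    LSeries.abscissaOfAbsConv_convolution_le 1 1

lemma LSeries_card_divisors (hs : 1 < s.re) :
    LSeries (fun n ↦ (n.divisors.card : ℂ)) s = riemannZeta s * riemannZeta s := by
  have h1 : LSeriesSummable 1 s := LSeriesSummable_one_iff.2 hs
  rw [← LSeries_convolution_one_one, LSeries_convolution' h1 h1, LSeries_one_eq_riemannZeta hs]

lemma LSeriesHasSum_logMul_card_divisors (hs : 1 < s.re) :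
    LSeriesHasSum (LSeries.logMul fun n ↦ (n.divisors.card : ℂ)) s
      (-2 * (riemannZeta s * deriv riemannZeta s)) := by
  have habs : LSeries.abscissaOfAbsConv (fun n ↦ (n.divisors.card : ℂ)) < s.re :=
    abscissaOfAbsConv_card_divisors_le_one.trans_lt (mod_cast hs)
  have hζ : DifferentiableAt ℂ riemannZeta s :=
    differentiableAt_riemannZeta (by rintro rfl; simp at hs)
  have hsq : LSeries (fun n ↦ (n.divisors.card : ℂ)) =ᶠ[𝓝 s]
      fun z ↦ riemannZeta z * riemannZeta z := by
    filter_upwards [(isOpen_lt continuous_const Complex.continuous_re).mem_nhds hs] with z hz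
      using LSeries_card_divisors hz
  have hderiv := LSeries_deriv habs
  rw [hsq.deriv_eq, deriv_fun_mul hζ hζ] at hderiv
  refine LSeriesHasSum_iff.2 ⟨LSeriesSummable_logMul_of_lt_re habs, ?_⟩
  linear_combination hderiv

end DivisorFunction

theorem stmt17 (y : ℂ) (hy : 0 < y.re) (c : ℝ) (hc : 1 < c) :
    ∑' n : ℕ, (((n + 1).divisors.card : ℂ) * (Real.log ((n : ℝ) + 1) : ℂ)
        * Complex.exp (-((n : ℂ) + 1) * y)) =
      -2 * ((1 / (2 * (Real.pi : ℂ))) * ∫ t : ℝ,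
        Complex.Gamma ((c : ℂ) + (t : ℂ) * Complex.I)
          * riemannZeta ((c : ℂ) + (t : ℂ) * Complex.I)
          * deriv riemannZeta ((c : ℂ) + (t : ℂ) * Complex.I)
          * y ^ (-((c : ℂ) + (t : ℂ) * Complex.I))) := by
  set a := LSeries.logMul fun n ↦ (n.divisors.card : ℂ) with ha
  have hsummable : LSeriesSummable a c :=
    (LSeriesHasSum_logMul_card_divisors (by simpa using hc)).LSeriesSummable
  have hline (t : ℝ) : LSeries a (c + t * Complex.I) =
      -2 * (riemannZeta (c + t * Complex.I) * deriv riemannZeta (c + t * Complex.I)) :=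
    (LSeriesHasSum_logMul_card_divisors (by simpa using hc)).LSeries_eq
  have hcoeff (n : ℕ) :
      a (n + 1) = ((n + 1).divisors.card : ℂ) * (Real.log ((n : ℝ) + 1) : ℂ) := by
    rw [ha, LSeries.logMul, mul_comm, Complex.ofReal_log (by positivity)]
    push_cast
    rfl
  calc _ = ∑' n : ℕ, a (n + 1) * Complex.exp (-(y * (n + 1))) :=
        tsum_congr fun n ↦ by rw [hcoeff, neg_mul, mul_comm y]
    _ = mellinInv c (fun s ↦ LSeries a s * (Complex.Gamma s * y ^ (-s))) 1 :=
        (hasSum_mul_exp_neg_of_LSeriesSummable hy (one_pos.trans hc) hsummable).tsum_eq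
    _ = _ := by
        simp only [mellinInv, hline, Complex.ofReal_one, Complex.one_cpow, one_smul]
        rw [mul_left_comm, ← integral_const_mul, Complex.real_smul]
        push_cast
        congr! 3
        ring
end

section
/- Let z ∈ ℂ ∖ (−∞,0]. Then lim_{n→∞} ( Σ_{j=0}^{n} log(j+z)/(j+z) − (1/2) log²(n+z) ) = −ψ₁(z). That is, ψ₁(z) = −γ₁(z), where γ₁(z) is the coefficient arising in the Laurent expansion of the Hurwitz zeta function ζ(s,z) = 1/(s−1) + Σ_{k=0}^∞ ((−1)^k γ_k(z)/k!) (s−1)^k at s = 1. -/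
open Filter Topology MeasureTheory

noncomputable def psi1 (z : ℂ) : ℂ :=
  -(gamma1 : ℂ) - Complex.log z / z -
    ∑' n : ℕ, (Complex.log (((n : ℂ) + 1) + z) / (((n : ℂ) + 1) + z)
      - Complex.log ((n : ℂ) + 1) / ((n : ℂ) + 1))

/-!
If `F' = f` is nonnegative and decreasing, then `F (n + 1) - F n` lies between `f (n + 1)` and
`f n`. Hence `∑_{j ≤ n} f j - F n` decreases, while `∑_{j ≤ n} f j - F n - f n` increases and bounds
it from below; for `f = log x / x` this gives the existence of the limit `γ₁`.

Since `log (t + z) - log t = O(1 / t)`, the terms `log (n + z) / (n + z) - log n / n` are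
`O(log n / n ^ 2)`, so the series in `ψ₁` converges, and `log² (n + z) - log² n` tends to `0`.
Adding the series to the limit defining `γ₁` therefore turns the regularized sum of `log j / j` into
that of `log (j + z) / (j + z)`.
-/

section SumSubPrimitive

variable {f F : ℝ → ℝ}

theorem slope_mem_Icc_of_antitoneOn_deriv {a b : ℝ} (hab : a < b)
    (hF : ∀ x ∈ Set.Icc a b, HasDerivAt F (f x) x) (hf : AntitoneOn f (Set.Icc a b)) :
    (F b - F a) / (b - a) ∈ Set.Icc (f b) (f a) := by
  obtain ⟨c, hc, hslope⟩ := exists_hasDerivAt_eq_slope F f hab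
    (fun x hx ↦ (hF x hx).continuousAt.continuousWithinAt)
    (fun x hx ↦ hF x (Set.Ioo_subset_Icc_self hx))
  have hcIcc := Set.Ioo_subset_Icc_self hc
  rw [← hslope]
  exact ⟨hf hcIcc (Set.right_mem_Icc.2 hab.le) hcIcc.2,
    hf (Set.left_mem_Icc.2 hab.le) hcIcc hcIcc.1⟩

theorem exists_tendsto_sum_sub_of_antitoneOn_deriv {N : ℕ}
    (hF : ∀ x ∈ Set.Ici (N : ℝ), HasDerivAt F (f x) x) (hf : AntitoneOn f (Set.Ici (N : ℝ)))
    (hf₀ : ∀ x ∈ Set.Ici (N : ℝ), 0 ≤ f x) :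
    ∃ l, Tendsto (fun n : ℕ ↦ ∑ j ∈ Finset.Icc 1 n, f j - F n) atTop (𝓝 l) := by
  set D : ℕ → ℝ := fun n ↦ ∑ j ∈ Finset.Icc 1 n, f j - F n with hD
  have hmem (k : ℕ) : ((k + N : ℕ) : ℝ) ∈ Set.Ici (N : ℝ) := by simp
  have hD_succ (n : ℕ) : D (n + 1) = D n + f (n + 1) - (F (n + 1) - F n) := by
    simp only [hD, Finset.sum_Icc_succ_top n.succ_pos, Nat.cast_add_one]
    ring
  have hstep (k : ℕ) : F ((k + N : ℕ) + 1) - F (k + N : ℕ) ∈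
      Set.Icc (f ((k + N : ℕ) + 1)) (f (k + N : ℕ)) := by
    have hsub : Set.Icc ((k + N : ℕ) : ℝ) ((k + N : ℕ) + 1) ⊆ Set.Ici (N : ℝ) :=
      fun x hx ↦ (hmem k).trans hx.1
    simpa only [add_sub_cancel_left, div_one] using slope_mem_Icc_of_antitoneOn_deriv
      (lt_add_one _) (fun x hx ↦ hF x (hsub hx)) (hf.mono hsub)
  have hanti : Antitone fun k ↦ D (k + N) := antitone_nat_of_succ_le fun k ↦ by
    rw [Nat.add_right_comm, hD_succ]
    linarith [(hstep k).1]
  have hmono : Monotone fun k ↦ D (k + N) - f (k + N : ℕ) := monotone_nat_of_le_succ fun k ↦ by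
    rw [Nat.add_right_comm, hD_succ, Nat.cast_add_one]
    linarith [(hstep k).2]
  have hbdd : BddBelow (Set.range fun k ↦ D (k + N)) := by
    refine ⟨D (0 + N) - f (0 + N : ℕ), Set.forall_mem_range.2 fun k ↦ ?_⟩
    exact (hmono k.zero_le).trans (sub_le_self _ (hf₀ _ (hmem k)))
  exact ⟨_, (tendsto_add_atTop_iff_nat N).1 (tendsto_atTop_ciInf hanti hbdd)⟩

end SumSubPrimitive

theorem tendsto_gamma1 :
    Tendsto (fun n : ℕ ↦ ∑ j ∈ Finset.Icc 1 n, Real.log j / j - Real.log n ^ 2 / 2)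
      atTop (𝓝 gamma1) := by
  have hderiv (x : ℝ) (hx : x ∈ Set.Ici ((3 : ℕ) : ℝ)) :
      HasDerivAt (fun t ↦ Real.log t ^ 2 / 2) (Real.log x / x) x := by
    have hx₀ : x ≠ 0 := by rintro rfl; norm_num at hx
    exact (((Real.hasDerivAt_log hx₀).fun_pow 2).div_const 2).congr_deriv (by ring)
  have hanti : AntitoneOn (fun x ↦ Real.log x / x) (Set.Ici ((3 : ℕ) : ℝ)) :=
    Real.log_div_self_antitoneOn.mono
      (Set.Ici_subset_Ici.2 (by exact_mod_cast Real.exp_one_lt_three.le))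
  refine tendsto_nhds_limUnder
    (exists_tendsto_sum_sub_of_antitoneOn_deriv hderiv hanti fun x hx ↦ ?_)
  have hx₁ : 1 ≤ x := le_trans (by norm_num) hx
  exact div_nonneg (Real.log_nonneg hx₁) (zero_le_one.trans hx₁)

theorem tendsto_sum_range_log_div_sub_log_sq :
    Tendsto (fun n : ℕ ↦ ∑ j ∈ Finset.range n, Complex.log ((j : ℂ) + 1) / ((j : ℂ) + 1)
      - 1 / 2 * Complex.log n ^ 2) atTop (𝓝 (gamma1 : ℂ)) := by
  refine tendsto_gamma1.ofReal.congr fun n ↦ ?_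
  have hsum : ∑ j ∈ Finset.Icc 1 n, Complex.log j / j =
      ∑ j ∈ Finset.range n, Complex.log ((j : ℂ) + 1) / ((j : ℂ) + 1) := by
    rw [Finset.range_eq_Ico, ← Finset.Ico_add_one_right_eq_Icc]
    simpa only [Nat.cast_add_one] using
      (Finset.sum_Ico_add' (fun j : ℕ ↦ Complex.log j / j) 0 n 1).symm
  push_cast
  rw [hsum]
  ring

theorem div_add_sub_div {K : Type*} [Field K] (a b : K) {w z : K} (hw : w ≠ 0)
    (hwz : w + z ≠ 0) : a / (w + z) - b / w = (a - b - z * (b / w)) / (w + z) := by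
  field_simp
  ring

section ShiftedLog

open Asymptotics

theorem isBigO_inv_ofReal_add (z : ℂ) :
    (fun t : ℝ ↦ ((t : ℂ) + z)⁻¹) =O[atTop] fun t : ℝ ↦ t⁻¹ := by
  have hz : (fun _ ↦ z) =o[atTop] fun t : ℝ ↦ (t : ℂ) :=
    Complex.isLittleO_ofReal_right.2 (isLittleO_const_id_atTop z)
  have hadd : (fun t : ℝ ↦ t) =O[atTop] fun t : ℝ ↦ (t : ℂ) + z :=
    Complex.isBigO_ofReal_left.1 hz.right_isBigO_add'
  refine hadd.inv_rev ?_
  filter_upwards [eventually_ne_atTop 0] with t ht h using absurd h ht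

theorem isBigO_log_ofReal_add_sub_log (z : ℂ) :
    (fun t : ℝ ↦ Complex.log (t + z) - Real.log t) =O[atTop] fun t : ℝ ↦ t⁻¹ := by
  have hlim : Tendsto (fun t : ℝ ↦ (t : ℂ) * Complex.log (1 + z / t)) atTop (𝓝 z) := by
    refine Complex.tendsto_mul_log_one_add_of_tendsto (tendsto_nhds_of_eventually_eq ?_)
    filter_upwards [eventually_ne_atTop 0] with t ht
    exact mul_div_cancel₀ z (mod_cast ht)
  refine ((isBigO_refl (fun t : ℝ ↦ t⁻¹) atTop).smul (hlim.isBigO_one ℝ)).congr' ?_ ?_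
  · filter_upwards [eventually_gt_atTop 0, eventually_gt_atTop ‖z‖] with t ht htz
    have ht₀ : (t : ℂ) ≠ 0 := mod_cast ht.ne'
    have hadd : (t : ℂ) * (1 + z / t) = t + z := by field_simp
    have hne : 1 + z / t ≠ 0 := by
      intro h
      have hz : z = -t := by linear_combination hadd.symm + t * h
      simp [hz, abs_of_pos ht] at htz
    rw [← hadd, Complex.log_ofReal_mul ht hne, add_sub_cancel_left, Complex.real_smul,
      Complex.ofReal_inv, inv_mul_cancel_left₀ ht₀]
  · simp

theorem tendsto_log_ofReal_add_sq_sub_log_sq (z : ℂ) :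
    Tendsto (fun t : ℝ ↦ Complex.log (t + z) ^ 2 - (Real.log t : ℂ) ^ 2) atTop (𝓝 0) := by
  have hdiff := isBigO_log_ofReal_add_sub_log z
  have hdiff₀ : Tendsto (fun t : ℝ ↦ Complex.log (t + z) - Real.log t) atTop (𝓝 0) :=
    hdiff.trans_tendsto tendsto_inv_atTop_zero
  have hlog : Tendsto (fun t : ℝ ↦ t⁻¹ * Real.log t) atTop (𝓝 0) := by
    simpa [div_eq_inv_mul] using Real.isLittleO_log_id_atTop.tendsto_div_nhds_zero
  have hcross : Tendsto (fun t : ℝ ↦ (Complex.log (t + z) - Real.log t) * (Real.log t : ℂ))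
      atTop (𝓝 0) :=
    (hdiff.mul (Complex.isTheta_ofReal Real.log atTop).isBigO).trans_tendsto hlog
  simpa using ((hdiff₀.pow 2).add (hcross.const_mul 2)).congr fun t ↦ by ring

/- By `div_add_sub_div`, the left side is `log (t + z) / (t + z) - log t / t`. -/
theorem isBigO_log_ofReal_add_div_sub_log_div (z : ℂ) :
    (fun t : ℝ ↦ (Complex.log (t + z) - Real.log t - z * (Real.log t / t)) / (t + z))
      =O[atTop] fun t : ℝ ↦ Real.log t * t⁻¹ ^ 2 := by
  have hinv_log : (fun t : ℝ ↦ t⁻¹) =O[atTop] fun t : ℝ ↦ Real.log t * t⁻¹ := by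
    simpa using Real.isLittleO_const_log_atTop (c := 1).isBigO.mul
      (isBigO_refl (fun t : ℝ ↦ t⁻¹) atTop)
  have hmain : (fun t : ℝ ↦ z * (Real.log t / t : ℂ)) =O[atTop] fun t : ℝ ↦ Real.log t * t⁻¹ := by
    simpa only [div_eq_mul_inv, Complex.ofReal_mul, Complex.ofReal_inv] using
      (Complex.isTheta_ofReal (fun t ↦ Real.log t * t⁻¹) atTop).isBigO.const_mul_left z
  have hnum := ((isBigO_log_ofReal_add_sub_log z).trans hinv_log).sub hmain
  refine (hnum.mul (isBigO_inv_ofReal_add z)).congr (fun t ↦ ?_) (fun t ↦ ?_) <;> ring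

theorem summable_log_mul_inv_sq : Summable fun n : ℕ ↦ Real.log n * (n : ℝ)⁻¹ ^ 2 := by
  have hO : (fun t : ℝ ↦ Real.log t * t⁻¹ ^ 2) =O[atTop] fun t : ℝ ↦ t ^ (-3 / 2 : ℝ) := by
    refine ((isLittleO_log_rpow_atTop (r := 1 / 2) (by norm_num)).isBigO.mul
      (isBigO_refl (fun t : ℝ ↦ t⁻¹ ^ 2) atTop)).congr' .rfl ?_
    filter_upwards [eventually_gt_atTop 0] with t ht
    rw [inv_pow, ← Real.rpow_natCast, ← Real.rpow_neg ht.le, ← Real.rpow_add ht]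
    norm_num
  exact summable_of_isBigO_nat (Real.summable_nat_rpow.2 (by norm_num))
    (hO.comp_tendsto tendsto_natCast_atTop_atTop)

end ShiftedLog

theorem summable_log_add_div_sub_log_div {z : ℂ} (hz : ∀ m : ℕ, z ≠ -m) :
    Summable fun n : ℕ ↦ Complex.log (((n : ℂ) + 1) + z) / (((n : ℂ) + 1) + z)
      - Complex.log ((n : ℂ) + 1) / ((n : ℂ) + 1) := by
  have hsum := summable_of_isBigO_nat summable_log_mul_inv_sq
    ((isBigO_log_ofReal_add_div_sub_log_div z).comp_tendsto tendsto_natCast_atTop_atTop)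
  refine ((summable_nat_add_iff 1).2 hsum).congr fun n ↦ ?_
  have hn : (n : ℂ) + 1 ≠ 0 := n.cast_add_one_ne_zero
  have hnz : (n : ℂ) + 1 + z ≠ 0 := fun h ↦
    hz (n + 1) (by push_cast; exact eq_neg_of_add_eq_zero_right h)
  have hlog : (Real.log (n + 1 : ℕ) : ℂ) = Complex.log (n + 1) := mod_cast Complex.natCast_log
  simp only [Function.comp_apply, hlog, div_add_sub_div _ _ hn hnz]
  norm_cast

theorem stmt18_general (z : ℂ) (hz : ∀ m : ℕ, z ≠ -m) :
    Tendsto (fun n : ℕ ↦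
        (∑ j ∈ Finset.range (n + 1), Complex.log ((j : ℂ) + z) / ((j : ℂ) + z))
          - (1/2) * (Complex.log ((n : ℂ) + z)) ^ 2)
      atTop (𝓝 (-psi1 z)) := by
  have hseries := (summable_log_add_div_sub_log_div hz).hasSum.tendsto_sum_nat
  have hlog := (tendsto_log_ofReal_add_sq_sub_log_sq z).comp tendsto_natCast_atTop_atTop
  have hlim := ((tendsto_sum_range_log_div_sub_log_sq.add hseries).sub
    (hlog.const_mul (1 / 2))).add_const (Complex.log z / z)
  convert hlim using 2 with n
  · simp only [Finset.sum_range_succ' _ n, Finset.sum_sub_distrib, Function.comp_apply,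
      Complex.ofReal_natCast, Complex.natCast_log, Nat.cast_add_one, Nat.cast_zero, zero_add]
    ring
  · rw [psi1]
    ring

theorem stmt18 (z : ℂ) (hz : z ∈ Complex.slitPlane) :
    Filter.Tendsto (fun n : ℕ =>
        (∑ j ∈ Finset.range (n + 1), Complex.log ((j : ℂ) + z) / ((j : ℂ) + z))
          - (1/2) * (Complex.log ((n : ℂ) + z)) ^ 2)
      atTop (nhds (-psi1 z)) :=
  stmt18_general z fun m hm ↦
    m.cast_nonneg.not_gt (by simpa [hm, Complex.mem_slitPlane_iff] using hz : (m : ℝ) < 0)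
end

section
/- For every integer N ≥ 1 and every λ ∈ (0, π/2), there exist constants C > 0 and r > 0 such that for all y ∈ ℂ with 0 < |y| ≤ r and |arg(y)| ≤ λ, | Σ_{n=1}^∞ { log(2πn/y) − (1/2)( ψ(2πin/y) + ψ(−2πin/y) ) } + (1/2) Σ_{k=1}^{N} B_{2k}² y^{2k} / ( (2k) · (2k)! ) | ≤ C |y|^{2N+2}. -/
open Filter Topology MeasureTheory

noncomputable def digamma (z : ℂ) : ℂ :=
  -(eulerGamma : ℂ) - 1 / z + ∑' n : ℕ, (1 / ((n : ℂ) + 1) - 1 / (((n : ℂ) + 1) + z))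

/-!
The difference between `ψ` and its truncated asymptotic expansion tends to `0` along `z + ℕ`, and
by the Euler–Maclaurin formula it changes by an integral of a Bernoulli polynomial under
`z ↦ z + 1`; hence it is the sum of these integrals over `z + m`, `m ≥ 0`. In a sector
`|arg z| ≤ θ < π` one has `cos (θ / 2) * (‖z‖ + t) ≤ ‖z + t‖` for `t ≥ 0`, so that the `m`-th
integral is dominated by the `m`-th term of a telescoping series, uniformly in `z`.

At the points `± i w` the odd terms of the expansion cancel, and the even ones, evaluated at
`w = 2 π n / y` and summed over `n`, produce `ζ (2 k)`. Euler's formula for `ζ (2 k)` supplies the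
second factor `B₂ₖ`. The errors are at most a constant times `(‖y‖ / n) ^ (2 N + 2)`, and their sum
over `n` converges.
-/

section SlitPlane

open Complex (slitPlane)

variable {z : ℂ} {t : ℝ}

lemma add_ofReal_mem_slitPlane (hz : z ∈ slitPlane) (ht : 0 ≤ t) : z + t ∈ slitPlane := by
  rw [Complex.mem_slitPlane_iff] at hz ⊢
  refine hz.imp (fun hre => ?_) (fun him => by simpa using him)
  simpa using add_pos_of_pos_of_nonneg hre ht

lemma add_natCast_mem_slitPlane (hz : z ∈ slitPlane) (m : ℕ) : z + m ∈ slitPlane := by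
  exact_mod_cast add_ofReal_mem_slitPlane hz (Nat.cast_nonneg m)

lemma cos_half_arg_mul_le_norm_add_ofReal (z : ℂ) (t : ℝ) :
    Real.cos (z.arg / 2) * (‖z‖ + t) ≤ ‖z + t‖ := by
  have norm_sq : ‖z + t‖ ^ 2 = ‖z‖ ^ 2 + 2 * t * (‖z‖ * Real.cos z.arg) + t ^ 2 := by
    rw [Complex.norm_mul_cos_arg, ← Complex.normSq_eq_norm_sq, ← Complex.normSq_eq_norm_sq,
      Complex.normSq_apply, Complex.normSq_apply]
    simp only [Complex.add_re, Complex.add_im, Complex.ofReal_re, Complex.ofReal_im]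
    ring
  have cos_arg : Real.cos z.arg = 2 * Real.cos (z.arg / 2) ^ 2 - 1 := by
    rw [← Real.cos_two_mul, mul_div_cancel₀ _ two_ne_zero]
  rw [cos_arg] at norm_sq
  refine le_of_sq_le_sq ?_ (norm_nonneg _)
  nlinarith [mul_nonneg (sub_nonneg.2 (Real.cos_sq_le_one (z.arg / 2))) (sq_nonneg (‖z‖ - t))]

lemma cos_half_mul_le_norm_add_ofReal {θ : ℝ} (hθ : θ ≤ Real.pi) (hz : |z.arg| ≤ θ) (ht : 0 ≤ t) :
    Real.cos (θ / 2) * (‖z‖ + t) ≤ ‖z + t‖ := by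
  have cos_le : Real.cos (θ / 2) ≤ Real.cos (z.arg / 2) := by
    rw [← Real.cos_abs (z.arg / 2), abs_div, abs_two]
    exact Real.cos_le_cos_of_nonneg_of_le_pi (by positivity) (by linarith [Real.pi_pos])
      (by linarith)
  exact (mul_le_mul_of_nonneg_right cos_le (by positivity)).trans
    (cos_half_arg_mul_le_norm_add_ofReal z t)

end SlitPlane

section BernoulliIntegral

open Complex (slitPlane)

/-- The Euler–Maclaurin remainder of order `p` of the function `t ↦ 1 / t` on the segment from `z`
to `z + 1`, up to sign. -/
noncomputable def bernoulliIntegral (p : ℕ) (z : ℂ) : ℂ :=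
  ∫ x in (0 : ℝ)..1, (bernoulliFun p x : ℂ) / (z + x) ^ (p + 1)

variable {p : ℕ} {z : ℂ}

lemma intervalIntegrable_bernoulliFun_div_pow (p q : ℕ) (hz : z ∈ slitPlane) :
    IntervalIntegrable (fun x : ℝ => (bernoulliFun p x : ℂ) / (z + x) ^ q) volume 0 1 := by
  refine ContinuousOn.intervalIntegrable ?_
  refine ContinuousOn.div (by fun_prop) (by fun_prop) fun x hx => pow_ne_zero _ ?_
  rw [Set.uIcc_of_le zero_le_one] at hx
  exact Complex.slitPlane_ne_zero (add_ofReal_mem_slitPlane hz hx.1)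

lemma hasDerivAt_add_ofReal (z : ℂ) (x : ℝ) : HasDerivAt (fun x : ℝ => z + (x : ℂ)) 1 x := by
  simpa using (Complex.ofRealCLM.hasDerivAt (x := x)).const_add z

lemma bernoulliIntegral_zero (hz : z ∈ slitPlane) :
    bernoulliIntegral 0 z = Complex.log (z + 1) - Complex.log z := by
  have hasDerivAt_log : ∀ x ∈ Set.uIcc (0 : ℝ) 1, HasDerivAt (fun x : ℝ => Complex.log (z + x))
      ((bernoulliFun 0 x : ℂ) / (z + x) ^ (0 + 1)) x := by
    intro x hx
    rw [Set.uIcc_of_le zero_le_one] at hx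
    simpa using (hasDerivAt_add_ofReal z x).clog_real (add_ofReal_mem_slitPlane hz hx.1)
  rw [bernoulliIntegral, intervalIntegral.integral_eq_sub_of_hasDerivAt hasDerivAt_log
    (intervalIntegrable_bernoulliFun_div_pow 0 _ hz)]
  simp

lemma hasDerivAt_bernoulliFun_div_pow (p : ℕ) {x : ℝ} (hx : z + x ≠ 0) :
    HasDerivAt (fun x : ℝ => (bernoulliFun (p + 1) x : ℂ) / ((p + 1) * (z + x) ^ (p + 1)))
      (bernoulliFun p x / (z + x) ^ (p + 1) - bernoulliFun (p + 1) x / (z + x) ^ (p + 2)) x := by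
  have hp : (p : ℂ) + 1 ≠ 0 := Nat.cast_add_one_ne_zero p
  have deriv_num := (hasDerivAt_bernoulliFun (p + 1) x).ofReal_comp
  have deriv_den := ((hasDerivAt_add_ofReal z x).pow (p + 1)).const_mul ((p : ℂ) + 1)
  refine (deriv_num.div deriv_den (mul_ne_zero hp (pow_ne_zero _ hx))).congr_deriv ?_
  simp only [Pi.pow_apply, Nat.add_sub_cancel]
  push_cast
  field_simp
  ring

/-- Integration by parts. The boundary term at `z + 1` carries `bernoulli'` because
`bernoulli' n` is the value at `1` of the `n`-th Bernoulli polynomial. -/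
lemma bernoulliIntegral_sub_succ (p : ℕ) (hz : z ∈ slitPlane) :
    bernoulliIntegral p z - bernoulliIntegral (p + 1) z =
      bernoulli' (p + 1) / ((p + 1) * (z + 1) ^ (p + 1))
        - bernoulli (p + 1) / ((p + 1) * z ^ (p + 1)) := by
  have int_p := intervalIntegrable_bernoulliFun_div_pow p (p + 1) hz
  have int_succ := intervalIntegrable_bernoulliFun_div_pow (p + 1) (p + 2) hz
  have eval_one : bernoulliFun (p + 1) 1 = bernoulli' (p + 1) := by
    rw [bernoulliFun, Polynomial.eval_one_map, Polynomial.bernoulli_eval_one, eq_ratCast]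
  have hasDerivAt_prim : ∀ x ∈ Set.uIcc (0 : ℝ) 1, HasDerivAt
      (fun x : ℝ => (bernoulliFun (p + 1) x : ℂ) / ((p + 1) * (z + x) ^ (p + 1)))
      (bernoulliFun p x / (z + x) ^ (p + 1) - bernoulliFun (p + 1) x / (z + x) ^ (p + 2)) x := by
    intro x hx
    rw [Set.uIcc_of_le zero_le_one] at hx
    exact hasDerivAt_bernoulliFun_div_pow p
      (Complex.slitPlane_ne_zero (add_ofReal_mem_slitPlane hz hx.1))
  rw [bernoulliIntegral, bernoulliIntegral, ← intervalIntegral.integral_sub int_p int_succ,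
    intervalIntegral.integral_eq_sub_of_hasDerivAt hasDerivAt_prim (int_p.sub int_succ)]
  simp [eval_one, bernoulliFun_eval_zero]

lemma integral_inv_add_pow {a : ℝ} (ha : 0 < a) (p : ℕ) :
    ∫ x in (0 : ℝ)..1, ((a + x) ^ (p + 2))⁻¹ =
      ((a ^ (p + 1))⁻¹ - ((a + 1) ^ (p + 1))⁻¹) / (p + 1) := by
  have hnot : (0 : ℝ) ∉ Set.uIcc (a + 0) (a + 1) := by
    rw [Set.uIcc_of_le (by linarith)]
    exact fun h => by linarith [h.1]
  have hexp : -((p + 2 : ℕ) : ℤ) + 1 = -((p + 1 : ℕ) : ℤ) := by push_cast; ring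
  rw [intervalIntegral.integral_comp_add_left (fun x : ℝ => (x ^ (p + 2))⁻¹)]
  simp only [← zpow_natCast, ← zpow_neg]
  rw [integral_zpow (Or.inr ⟨by lia, hnot⟩), hexp]
  push_cast
  rw [← neg_div_neg_eq]
  congr 1 <;> ring_nf

lemma norm_bernoulliIntegral_succ_le {a c B : ℝ} (ha : 0 < a) (hc : 0 < c)
    (hB : ∀ x ∈ Set.Icc (0 : ℝ) 1, ‖bernoulliFun (p + 1) x‖ ≤ B)
    (hz : ∀ x : ℝ, 0 ≤ x → c * (a + x) ≤ ‖z + x‖) :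
    ‖bernoulliIntegral (p + 1) z‖ ≤
      B / c ^ (p + 2) / (p + 1) * ((a ^ (p + 1))⁻¹ - ((a + 1) ^ (p + 1))⁻¹) := by
  have hB_nonneg : 0 ≤ B := (norm_nonneg _).trans (hB 0 (by simp))
  have integrand_le : ∀ x ∈ Set.Ioc (0 : ℝ) 1,
      ‖(bernoulliFun (p + 1) x : ℂ) / (z + x) ^ (p + 2)‖
        ≤ B / c ^ (p + 2) * ((a + x) ^ (p + 2))⁻¹ := by
    intro x hx
    have hax : 0 < a + x := add_pos ha hx.1
    rw [norm_div, norm_pow, Complex.norm_real, ← div_eq_mul_inv, div_div, ← mul_pow]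
    gcongr
    · exact hB x (Set.Ioc_subset_Icc_self hx)
    · exact hz x hx.1.le
  have int_bound : IntervalIntegrable (fun x : ℝ => B / c ^ (p + 2) * ((a + x) ^ (p + 2))⁻¹)
      volume 0 1 := by
    refine ContinuousOn.intervalIntegrable (continuousOn_const.mul ?_)
    refine ContinuousOn.inv₀ (by fun_prop) fun x hx => pow_ne_zero _ ?_
    rw [Set.uIcc_of_le zero_le_one] at hx
    linarith [hx.1]
  refine (intervalIntegral.norm_integral_le_of_norm_le zero_le_one
    (ae_of_all _ integrand_le) int_bound).trans_eq ?_
  rw [intervalIntegral.integral_const_mul, integral_inv_add_pow ha]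
  ring

end BernoulliIntegral

section Digamma

open Complex (slitPlane)

lemma summable_one_div_add_one_sub (z : ℂ) :
    Summable fun n : ℕ => 1 / ((n : ℂ) + 1) - 1 / (((n : ℂ) + 1) + z) := by
  have summable_sq : Summable fun n : ℕ => 2 * ‖z‖ * (1 / ((n : ℝ) + 1) ^ 2) := by
    refine Summable.mul_left _ ?_
    exact_mod_cast (summable_nat_add_iff 1).2 (Real.summable_one_div_nat_pow.2 one_lt_two)
  refine summable_sq.of_norm_bounded_eventually_nat ?_
  filter_upwards [eventually_ge_atTop (⌈2 * ‖z‖⌉₊)] with n hn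
  have hz : 2 * ‖z‖ ≤ n := (Nat.le_ceil _).trans (by exact_mod_cast hn)
  have norm_succ : ‖(n : ℂ) + 1‖ = n + 1 := by exact_mod_cast Complex.norm_natCast (n + 1)
  have norm_add : ((n : ℝ) + 1) / 2 ≤ ‖(n : ℂ) + 1 + z‖ := by
    have := norm_sub_le_norm_add ((n : ℂ) + 1) z
    linarith
  have succ_ne : (n : ℂ) + 1 ≠ 0 := Nat.cast_add_one_ne_zero n
  have add_ne : (n : ℂ) + 1 + z ≠ 0 := norm_pos_iff.1 (lt_of_lt_of_le (by positivity) norm_add)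
  rw [div_sub_div _ _ succ_ne add_ne, norm_div, norm_mul, norm_succ]
  calc ‖1 * ((n : ℂ) + 1 + z) - ((n : ℂ) + 1) * 1‖ / ((n + 1) * ‖(n : ℂ) + 1 + z‖)
      ≤ ‖z‖ / ((n + 1) * (((n : ℝ) + 1) / 2)) := by
        gcongr
        exact (congrArg norm (by ring)).le
    _ = 2 * ‖z‖ * (1 / ((n : ℝ) + 1) ^ 2) := by field_simp

lemma tendsto_log_sub_sum_one_div_digamma (z : ℂ) :
    Tendsto (fun M : ℕ => Complex.log M - ∑ m ∈ Finset.range M, 1 / (z + m)) atTop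
      (𝓝 (digamma z)) := by
  have tendsto_gamma : Tendsto
      (fun n : ℕ => ((harmonic n - Real.log (n + 1) : ℝ) : ℂ)) atTop (𝓝 (eulerGamma : ℂ)) :=
    (Complex.continuous_ofReal.tendsto _).comp Real.tendsto_harmonic_sub_log_add_one
  have tendsto_series := (summable_one_div_add_one_sub z).hasSum.tendsto_sum_nat
  rw [← tendsto_add_atTop_iff_nat 1]
  have tendsto_total := (tendsto_gamma.neg.sub_const (1 / z)).add tendsto_series
  refine tendsto_total.congr fun M => ?_
  have log_cast : ((Real.log (M + 1) : ℝ) : ℂ) = Complex.log (M + 1) := by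
    rw [Complex.ofReal_log (by positivity)]
    push_cast
    rfl
  have harmonic_cast : ((harmonic M : ℝ) : ℂ) = ∑ n ∈ Finset.range M, 1 / ((n : ℂ) + 1) := by
    simp [harmonic]
  rw [Complex.ofReal_sub, log_cast, harmonic_cast, Finset.sum_sub_distrib, Finset.sum_range_succ']
  push_cast
  simp only [add_comm z, zero_add]
  ring

/-- The Stirling-type asymptotic expansion of `digamma` at infinity, truncated after `p` terms.
With `bernoulli'`, for which `B₁ = 1 / 2`, the term `- 1 / (2 * z)` fits the general pattern. -/
noncomputable def digammaExpansion (p : ℕ) (z : ℂ) : ℂ :=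
  Complex.log z - ∑ j ∈ Finset.Icc 1 p, (bernoulli' j : ℂ) / (j * z ^ j)

variable {z : ℂ}

lemma digammaExpansion_succ (p : ℕ) (z : ℂ) :
    digammaExpansion (p + 1) z =
      digammaExpansion p z - bernoulli' (p + 1) / ((p + 1) * z ^ (p + 1)) := by
  rw [digammaExpansion, digammaExpansion, Finset.sum_Icc_succ_top (by lia)]
  push_cast
  ring

lemma digammaExpansion_add_one_sub (p : ℕ) (hz : z ∈ slitPlane) :
    digammaExpansion (p + 1) (z + 1) - digammaExpansion (p + 1) z =
      1 / z + bernoulliIntegral (p + 1) z := by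
  have by_parts := bernoulliIntegral_sub_succ p hz
  rw [digammaExpansion_succ, digammaExpansion_succ]
  induction p with
  | zero =>
    have by_log := bernoulliIntegral_zero hz
    norm_num [digammaExpansion, bernoulli_one, bernoulli'_one] at by_parts ⊢
    linear_combination by_parts - by_log
  | succ p ih =>
    have ih := ih (bernoulliIntegral_sub_succ p hz)
    rw [bernoulli_eq_bernoulli'_of_ne_one (by lia)] at by_parts
    rw [digammaExpansion_succ, digammaExpansion_succ]
    linear_combination ih + by_parts

lemma tendsto_log_natCast_sub_log_add (z : ℂ) :
    Tendsto (fun M : ℕ => Complex.log M - Complex.log (z + M)) atTop (𝓝 0) := by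
  have tendsto_one : Tendsto (fun M : ℕ => 1 + z * (M : ℂ)⁻¹) atTop (𝓝 1) := by
    simpa using ((tendsto_inv_atTop_nhds_zero_nat (𝕜 := ℂ)).const_mul z).const_add 1
  have tendsto_log : Tendsto (fun M : ℕ => -Complex.log (1 + z * (M : ℂ)⁻¹)) atTop (𝓝 0) := by
    simpa using (tendsto_one.clog Complex.one_mem_slitPlane).neg
  refine tendsto_log.congr' ?_
  filter_upwards [eventually_gt_atTop 0, tendsto_one.eventually_ne one_ne_zero] with M hM hne
  have hM' : (M : ℂ) ≠ 0 := Nat.cast_ne_zero.2 hM.ne'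
  have factor : z + M = (M : ℝ) * (1 + z * (M : ℂ)⁻¹) := by
    push_cast
    field_simp
    ring
  rw [factor, Complex.log_ofReal_mul (Nat.cast_pos.2 hM) hne, Complex.natCast_log]
  ring

lemma tendsto_log_natCast_sub_digammaExpansion (p : ℕ) (z : ℂ) :
    Tendsto (fun M : ℕ => Complex.log M - digammaExpansion p (z + M)) atTop (𝓝 0) := by
  induction p with
  | zero => simpa [digammaExpansion] using tendsto_log_natCast_sub_log_add z
  | succ p ih =>
    have tendsto_inv : Tendsto (fun M : ℕ => (z + (M : ℂ))⁻¹) atTop (𝓝 0) :=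
      tendsto_inv₀_cobounded.comp
        ((tendsto_const_add_cobounded z).comp tendsto_natCast_atTop_cobounded)
    have tendsto_term :=
      (tendsto_inv.pow (p + 1)).const_mul ((bernoulli' (p + 1) : ℂ) / (p + 1))
    rw [zero_pow p.succ_ne_zero, mul_zero] at tendsto_term
    rw [← add_zero (0 : ℂ)]
    refine (ih.add tendsto_term).congr fun M => ?_
    rw [digammaExpansion_succ, inv_pow, ← div_eq_mul_inv, div_div]
    ring

lemma tendsto_sum_bernoulliIntegral (p : ℕ) (hz : z ∈ slitPlane) :
    Tendsto (fun M : ℕ => ∑ m ∈ Finset.range M, bernoulliIntegral (p + 1) (z + m)) atTop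
      (𝓝 (digamma z - digammaExpansion (p + 1) z)) := by
  have telescope (M : ℕ) :
      ∑ m ∈ Finset.range M, (1 / (z + m) + bernoulliIntegral (p + 1) (z + m)) =
        digammaExpansion (p + 1) (z + M) - digammaExpansion (p + 1) z := by
    have := Finset.sum_range_sub (fun m : ℕ => digammaExpansion (p + 1) (z + m)) M
    rw [Nat.cast_zero, add_zero] at this
    rw [← this]
    refine Finset.sum_congr rfl fun m _ => ?_
    rw [← digammaExpansion_add_one_sub p (add_natCast_mem_slitPlane hz m), Nat.cast_succ, add_assoc]
  have tendsto_diff := ((tendsto_log_sub_sum_one_div_digamma z).sub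
    (tendsto_log_natCast_sub_digammaExpansion (p + 1) z)).sub_const (digammaExpansion (p + 1) z)
  rw [sub_zero] at tendsto_diff
  refine tendsto_diff.congr fun M => ?_
  have := telescope M
  rw [Finset.sum_add_distrib] at this
  linear_combination -this

lemma exists_norm_bernoulliIntegral_add_natCast_le (p : ℕ) {θ : ℝ} (hθ : θ < Real.pi) :
    ∃ K ≥ 0, ∀ z : ℂ, z ≠ 0 → |z.arg| ≤ θ → ∀ m : ℕ,
      ‖bernoulliIntegral (p + 1) (z + m)‖ ≤
        K * (((‖z‖ + m) ^ (p + 1))⁻¹ - ((‖z‖ + (m + 1 : ℕ)) ^ (p + 1))⁻¹) := by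
  obtain ⟨B, hB⟩ := (isCompact_Icc (a := (0 : ℝ)) (b := 1)).exists_bound_of_continuousOn
    (continuous_bernoulliFun (p + 1)).continuousOn
  have hB_nonneg : 0 ≤ B := (norm_nonneg _).trans (hB 0 (by simp))
  rcases lt_or_ge θ 0 with hθ_neg | hθ_nonneg
  · exact ⟨0, le_rfl, fun z _ hz => absurd ((abs_nonneg _).trans hz) hθ_neg.not_ge⟩
  have cos_pos : 0 < Real.cos (θ / 2) :=
    Real.cos_pos_of_mem_Ioo ⟨by linarith [Real.pi_pos], by linarith⟩
  refine ⟨B / Real.cos (θ / 2) ^ (p + 2) / (p + 1), by positivity, fun z hz harg m => ?_⟩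
  have add_pos : 0 < ‖z‖ + m := add_pos_of_pos_of_nonneg (norm_pos_iff.2 hz) m.cast_nonneg
  rw [Nat.cast_succ, ← add_assoc]
  refine norm_bernoulliIntegral_succ_le add_pos cos_pos hB fun x hx => ?_
  simpa [add_assoc] using
    cos_half_mul_le_norm_add_ofReal hθ.le harg (add_nonneg m.cast_nonneg hx)

lemma exists_norm_digamma_sub_digammaExpansion_succ_le (p : ℕ) {θ : ℝ} (hθ : θ < Real.pi) :
    ∃ K ≥ 0, ∀ z : ℂ, z ≠ 0 → |z.arg| ≤ θ →
      ‖digamma z - digammaExpansion (p + 1) z‖ ≤ K / ‖z‖ ^ (p + 1) := by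
  obtain ⟨K, hK, bound⟩ := exists_norm_bernoulliIntegral_add_natCast_le p hθ
  refine ⟨K, hK, fun z hz harg => ?_⟩
  have slit : z ∈ slitPlane :=
    Complex.mem_slitPlane_iff_arg.2 ⟨((le_abs_self _).trans_lt (harg.trans_lt hθ)).ne, hz⟩
  refine le_of_tendsto' (tendsto_sum_bernoulliIntegral p slit).norm fun M => ?_
  calc ‖∑ m ∈ Finset.range M, bernoulliIntegral (p + 1) (z + m)‖
      ≤ ∑ m ∈ Finset.range M,
          K * (((‖z‖ + m) ^ (p + 1))⁻¹ - ((‖z‖ + (m + 1 : ℕ)) ^ (p + 1))⁻¹) :=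
        norm_sum_le_of_le _ fun m _ => bound z hz harg m
    _ = K * ((‖z‖ ^ (p + 1))⁻¹ - ((‖z‖ + M) ^ (p + 1))⁻¹) := by
        rw [← Finset.mul_sum,
          Finset.sum_range_sub' (fun m : ℕ => ((‖z‖ + m) ^ (p + 1))⁻¹), Nat.cast_zero, add_zero]
    _ ≤ K * (‖z‖ ^ (p + 1))⁻¹ := by
        gcongr
        exact sub_le_self _ (by positivity)
    _ = K / ‖z‖ ^ (p + 1) := (div_eq_mul_inv _ _).symm

/-- The bound is that of the first omitted term, hence the passage through order `p + 1`. -/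
theorem exists_norm_digamma_sub_digammaExpansion_le (p : ℕ) {θ : ℝ} (hθ : θ < Real.pi) :
    ∃ C > 0, ∀ z : ℂ, z ≠ 0 → |z.arg| ≤ θ →
      ‖digamma z - digammaExpansion p z‖ ≤ C / ‖z‖ ^ (p + 1) := by
  obtain ⟨K, hK, bound⟩ := exists_norm_digamma_sub_digammaExpansion_succ_le p hθ
  set b : ℂ := (bernoulli' (p + 1) : ℂ) / (p + 1)
  refine ⟨K + ‖b‖ + 1, by positivity, fun z hz harg => ?_⟩
  have split : digamma z - digammaExpansion p z =
      (digamma z - digammaExpansion (p + 1) z) - b / z ^ (p + 1) := by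
    rw [digammaExpansion_succ, div_div]
    ring
  calc ‖digamma z - digammaExpansion p z‖
      ≤ ‖digamma z - digammaExpansion (p + 1) z‖ + ‖b / z ^ (p + 1)‖ := split ▸ norm_sub_le _ _
    _ ≤ K / ‖z‖ ^ (p + 1) + ‖b‖ / ‖z‖ ^ (p + 1) := by
        rw [norm_div, norm_pow]
        gcongr
        exact bound z hz harg
    _ ≤ (K + ‖b‖ + 1) / ‖z‖ ^ (p + 1) := by
        rw [← add_div]
        exact div_le_div_of_nonneg_right (by linarith) (by positivity)

end Digamma

section LogSubDigamma

open Complex (I)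

/-- The function `w ↦ log w - (ψ (i w) + ψ (-i w)) / 2`; the theorem concerns its sum over
`w = 2 π n / y`, `n ≥ 1`. -/
noncomputable def logSubDigamma (w : ℂ) : ℂ :=
  Complex.log w - (1 / 2) * (digamma (I * w) + digamma (-(I * w)))

/-- The asymptotic expansion of `logSubDigamma` at infinity, truncated after `N` terms. -/
noncomputable def logSubDigammaExpansion (N : ℕ) (w : ℂ) : ℂ :=
  ∑ k ∈ Finset.Icc 1 N, (-1) ^ k * (bernoulli (2 * k) : ℂ) / (2 * k) / w ^ (2 * k)

variable {w : ℂ}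

lemma arg_I_mul (hw : 0 < w.re) : (I * w).arg = Real.pi / 2 + w.arg := by
  have hw0 : w ≠ 0 := by rintro rfl; exact hw.false
  obtain ⟨hlow, hup⟩ := abs_lt.1 (Complex.abs_arg_lt_pi_div_two_iff.2 (Or.inl hw))
  rw [(Complex.arg_mul_eq_add_arg_iff Complex.I_ne_zero hw0).2, Complex.arg_I]
  rw [Complex.arg_I]
  constructor <;> linarith [Real.pi_pos]

lemma arg_neg_I_mul (hw : 0 < w.re) : (-(I * w)).arg = -(Real.pi / 2) + w.arg := by
  have hw0 : w ≠ 0 := by rintro rfl; exact hw.false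
  obtain ⟨hlow, hup⟩ := abs_lt.1 (Complex.abs_arg_lt_pi_div_two_iff.2 (Or.inl hw))
  rw [← neg_mul, (Complex.arg_mul_eq_add_arg_iff (neg_ne_zero.2 Complex.I_ne_zero) hw0).2,
    Complex.arg_neg_I]
  rw [Complex.arg_neg_I]
  constructor <;> linarith [Real.pi_pos]

lemma log_I_mul_add_log_neg_I_mul (hw : 0 < w.re) :
    Complex.log (I * w) + Complex.log (-(I * w)) = 2 * Complex.log w := by
  simp only [Complex.log, arg_I_mul hw, arg_neg_I_mul hw, norm_neg, norm_mul, Complex.norm_I,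
    one_mul]
  push_cast
  ring

/-- The even terms of the expansions at `± i w` agree and the odd ones cancel. -/
lemma digammaExpansion_I_mul_add_neg (N : ℕ) (hw : 0 < w.re) :
    digammaExpansion (2 * N + 1) (I * w) + digammaExpansion (2 * N + 1) (-(I * w)) =
      2 * (Complex.log w - logSubDigammaExpansion N w) := by
  rw [logSubDigammaExpansion]
  induction N with
  | zero =>
    simp only [digammaExpansion, mul_zero, zero_add, Finset.Icc_self, Finset.sum_singleton,
      pow_one, mul_neg, div_neg, Finset.Icc_eq_empty_of_lt zero_lt_one, Finset.sum_empty]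
    linear_combination log_I_mul_add_log_neg_I_mul hw
  | succ N ih =>
    have even_pow : (I * w) ^ (2 * N + 1 + 1) = (-1) ^ (N + 1) * w ^ (2 * (N + 1)) := by
      rw [← Complex.I_sq, ← pow_mul, ← mul_pow]
      rfl
    have neg_even_pow : (-(I * w)) ^ (2 * N + 1 + 1) = (I * w) ^ (2 * N + 1 + 1) :=
      Even.neg_pow ⟨N + 1, by ring⟩ _
    have neg_odd_pow : (-(I * w)) ^ (2 * N + 1 + 1 + 1) = -(I * w) ^ (2 * N + 1 + 1 + 1) :=
      Odd.neg_pow ⟨N + 1, by ring⟩ _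
    have index_cast : ((2 * N + 1 : ℕ) : ℂ) + 1 = 2 * ((N + 1 : ℕ) : ℂ) := by
      push_cast
      ring
    have inv_sign : ((-1 : ℂ) ^ (N + 1))⁻¹ = (-1) ^ (N + 1) := by
      rw [← inv_pow, inv_neg_one]
    rw [show 2 * (N + 1) + 1 = 2 * N + 1 + 1 + 1 by ring,
      digammaExpansion_succ (2 * N + 1 + 1), digammaExpansion_succ (2 * N + 1),
      digammaExpansion_succ (2 * N + 1 + 1), digammaExpansion_succ (2 * N + 1),
      neg_odd_pow, neg_even_pow, even_pow, index_cast, Finset.sum_Icc_succ_top (by lia),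
      bernoulli_eq_bernoulli'_of_ne_one (n := 2 * (N + 1)) (by lia),
      show 2 * N + 1 + 1 = 2 * (N + 1) by ring]
    simp only [div_eq_mul_inv, mul_inv, inv_sign] at ih ⊢
    linear_combination ih

theorem exists_norm_logSubDigamma_sub_le (N : ℕ) {lam : ℝ} (hlam : lam < Real.pi / 2) :
    ∃ C > 0, ∀ w : ℂ, w ≠ 0 → |w.arg| ≤ lam →
      ‖logSubDigamma w - logSubDigammaExpansion N w‖ ≤ C / ‖w‖ ^ (2 * N + 2) := by
  obtain ⟨C, hC, bound⟩ := exists_norm_digamma_sub_digammaExpansion_le (2 * N + 1)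
    (show Real.pi / 2 + lam < Real.pi by linarith)
  refine ⟨C, hC, fun w hw harg => ?_⟩
  have hre : 0 < w.re :=
    (Complex.abs_arg_lt_pi_div_two_iff.1 (harg.trans_lt hlam)).resolve_right hw
  have hIw : I * w ≠ 0 := mul_ne_zero Complex.I_ne_zero hw
  have norm_Iw : ‖I * w‖ = ‖w‖ := by rw [norm_mul, Complex.norm_I, one_mul]
  obtain ⟨hlow, hup⟩ := abs_le.1 harg
  have bound_pos := bound (I * w) hIw <| by
    rw [arg_I_mul hre, abs_le]
    constructor <;> linarith [Real.pi_pos]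
  have bound_neg := bound (-(I * w)) (neg_ne_zero.2 hIw) <| by
    rw [arg_neg_I_mul hre, abs_le]
    constructor <;> linarith [Real.pi_pos]
  rw [norm_Iw] at bound_pos
  rw [norm_neg, norm_Iw] at bound_neg
  have average : logSubDigamma w - logSubDigammaExpansion N w =
      -(1 / 2) * ((digamma (I * w) - digammaExpansion (2 * N + 1) (I * w))
        + (digamma (-(I * w)) - digammaExpansion (2 * N + 1) (-(I * w)))) := by
    rw [logSubDigamma]
    linear_combination (-1 / 2 : ℂ) * digammaExpansion_I_mul_add_neg N hre
  rw [average, norm_mul, norm_neg, norm_div, norm_one, Complex.norm_two]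
  linarith [norm_add_le (digamma (I * w) - digammaExpansion (2 * N + 1) (I * w))
    (digamma (-(I * w)) - digammaExpansion (2 * N + 1) (-(I * w)))]

end LogSubDigamma

section Lattice

open scoped Real

lemma two_pi_mul_add_one_div_eq (n : ℕ) (y : ℂ) :
    2 * (π : ℂ) * ((n : ℂ) + 1) / y = ((2 * π * (n + 1) : ℝ) : ℂ) * y⁻¹ := by
  push_cast
  rw [div_eq_mul_inv]

lemma two_pi_mul_add_one_div_ne_zero (n : ℕ) {y : ℂ} (hy : y ≠ 0) :
    2 * (π : ℂ) * ((n : ℂ) + 1) / y ≠ 0 := by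
  rw [two_pi_mul_add_one_div_eq]
  exact mul_ne_zero (Complex.ofReal_ne_zero.2 (by positivity)) (inv_ne_zero hy)

lemma abs_arg_two_pi_mul_add_one_div (n : ℕ) (y : ℂ) :
    |(2 * (π : ℂ) * ((n : ℂ) + 1) / y).arg| = |y.arg| := by
  rw [two_pi_mul_add_one_div_eq, Complex.arg_real_mul _ (by positivity), Complex.abs_arg_inv]

lemma norm_two_pi_mul_add_one_div (n : ℕ) (y : ℂ) :
    ‖2 * (π : ℂ) * ((n : ℂ) + 1) / y‖ = 2 * π * (n + 1) / ‖y‖ := by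
  rw [two_pi_mul_add_one_div_eq, norm_mul, norm_inv, Complex.norm_of_nonneg (by positivity),
    div_eq_mul_inv]

lemma hasSum_inv_two_pi_mul_add_one_div_pow {k : ℕ} (hk : k ≠ 0) (y : ℂ) :
    HasSum (fun n : ℕ => ((2 * (π : ℂ) * ((n : ℂ) + 1) / y) ^ (2 * k))⁻¹)
      ((-1) ^ (k + 1) * bernoulli (2 * k) * y ^ (2 * k) / (2 * (2 * k).factorial)) := by
  have zeta_even := (hasSum_nat_add_iff' 1).2 (hasSum_zeta_nat hk)
  have scaled := (Complex.hasSum_ofReal.2 zeta_even).mul_left ((y / (2 * π)) ^ (2 * k))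
  convert! scaled using 1
  · funext n
    push_cast
    rw [div_pow, div_pow, mul_pow _ ((n : ℂ) + 1), inv_div, div_mul_div_comm, mul_one]
  · rw [Finset.sum_range_one, Nat.cast_zero, zero_pow (by lia), div_zero, sub_zero]
    push_cast
    rw [div_pow, mul_pow 2 (π : ℂ), ← mul_pow_sub_one (show 2 * k ≠ 0 by lia) (2 : ℂ)]
    field_simp

lemma hasSum_logSubDigammaExpansion (N : ℕ) (y : ℂ) :
    HasSum (fun n : ℕ => logSubDigammaExpansion N (2 * (π : ℂ) * ((n : ℂ) + 1) / y))
      (-((1 / 2) * ∑ k ∈ Finset.Icc 1 N,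
        ((bernoulli (2 * k) : ℂ) ^ 2 * y ^ (2 * k)) / ((2 * k) * (2 * k).factorial))) := by
  rw [Finset.mul_sum, ← Finset.sum_neg_distrib]
  refine hasSum_sum fun k hk => ?_
  have hk : k ≠ 0 := Nat.one_le_iff_ne_zero.1 (Finset.mem_Icc.1 hk).1
  have term := (hasSum_inv_two_pi_mul_add_one_div_pow hk y).mul_left
    ((-1) ^ k * (bernoulli (2 * k) : ℂ) / (2 * k))
  simp only [← div_eq_mul_inv] at term
  convert! term using 1
  have sign : (-1 : ℂ) ^ k * (-1) ^ (k + 1) = -1 := by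
    rw [← pow_add]
    exact Odd.neg_one_pow ⟨k, by ring⟩
  linear_combination (-((bernoulli (2 * k) : ℂ) ^ 2 * y ^ (2 * k))
    / ((2 * k) * (2 * (2 * k).factorial))) * sign

lemma summable_inv_two_pi_mul_add_one_pow (N : ℕ) :
    Summable fun n : ℕ => ((2 * π * ((n : ℝ) + 1)) ^ (2 * N + 2))⁻¹ := by
  simp only [mul_pow _ ((_ : ℝ) + 1), mul_inv]
  exact_mod_cast ((summable_nat_add_iff 1).2
    (Real.summable_nat_pow_inv.2 (show 1 < 2 * N + 2 by lia))).mul_left _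

theorem stmt19_general (N : ℕ) {lam : ℝ} (hlam : lam < π / 2) :
    ∃ C > 0, ∀ y : ℂ, y ≠ 0 → |y.arg| ≤ lam →
      Summable (fun n : ℕ => logSubDigamma (2 * (π : ℂ) * ((n : ℂ) + 1) / y)) ∧
      ‖(∑' n : ℕ, logSubDigamma (2 * (π : ℂ) * ((n : ℂ) + 1) / y))
          + (1 / 2) * ∑ k ∈ Finset.Icc 1 N,
            ((bernoulli (2 * k) : ℂ) ^ 2 * y ^ (2 * k)) / ((2 * k) * (2 * k).factorial)‖
        ≤ C * ‖y‖ ^ (2 * N + 2) := by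
  obtain ⟨C, hC, bound⟩ := exists_norm_logSubDigamma_sub_le N hlam
  have summable_S := summable_inv_two_pi_mul_add_one_pow N
  refine ⟨C * ∑' n : ℕ, ((2 * π * ((n : ℝ) + 1)) ^ (2 * N + 2))⁻¹,
    mul_pos hC (summable_S.tsum_pos (fun n => by positivity) 0 (by positivity)),
    fun y hy harg => ?_⟩
  have hasSum_expansion := hasSum_logSubDigammaExpansion N y
  have hasSum_bound := summable_S.hasSum.mul_left (C * ‖y‖ ^ (2 * N + 2))
  have error_le (n : ℕ) :
      ‖logSubDigamma (2 * (π : ℂ) * ((n : ℂ) + 1) / y)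
          - logSubDigammaExpansion N (2 * (π : ℂ) * ((n : ℂ) + 1) / y)‖
        ≤ C * ‖y‖ ^ (2 * N + 2) * ((2 * π * ((n : ℝ) + 1)) ^ (2 * N + 2))⁻¹ := by
    have := bound _ (two_pi_mul_add_one_div_ne_zero n hy)
      ((abs_arg_two_pi_mul_add_one_div n y).trans_le harg)
    rwa [norm_two_pi_mul_add_one_div, div_pow, div_div_eq_mul_div, div_eq_mul_inv] at this
  have summable_error := Summable.of_norm_bounded hasSum_bound.summable error_le
  have summable_logSubDigamma :
      Summable fun n : ℕ => logSubDigamma (2 * (π : ℂ) * ((n : ℂ) + 1) / y) := by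
    simpa only [sub_add_cancel] using summable_error.add hasSum_expansion.summable
  refine ⟨summable_logSubDigamma, ?_⟩
  rw [← sub_neg_eq_add, ← hasSum_expansion.tsum_eq,
    ← summable_logSubDigamma.tsum_sub hasSum_expansion.summable, mul_right_comm]
  exact tsum_of_norm_bounded hasSum_bound error_le

end Lattice

theorem stmt19 (N : ℕ) (hN : 1 ≤ N) (lam : ℝ) (hl : 0 < lam) (hl2 : lam < Real.pi / 2) :
    ∃ C > 0, ∃ r > 0, ∀ y : ℂ, 0 < ‖y‖ → ‖y‖ ≤ r → |Complex.arg y| ≤ lam →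
      ‖(∑' n : ℕ, (Complex.log (2 * (Real.pi : ℂ) * ((n : ℂ) + 1) / y)
            - (1/2) * (digamma (2 * (Real.pi : ℂ) * Complex.I * ((n : ℂ) + 1) / y)
              + digamma (-(2 * (Real.pi : ℂ) * Complex.I * ((n : ℂ) + 1) / y)))))
        + (1/2) * ∑ k ∈ Finset.Icc 1 N,
            ((bernoulli (2 * k) : ℂ) ^ 2 * y ^ (2 * k))
              / ((2 * (k : ℂ)) * (Nat.factorial (2 * k) : ℂ))‖
        ≤ C * ‖y‖ ^ (2 * N + 2) := by
  obtain ⟨C, hC, bound⟩ := stmt19_general N hl2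
  refine ⟨C, hC, 1, one_pos, fun y hy _ harg => ?_⟩
  have I_mul (n : ℕ) : 2 * (Real.pi : ℂ) * Complex.I * ((n : ℂ) + 1) / y =
      Complex.I * (2 * (Real.pi : ℂ) * ((n : ℂ) + 1) / y) := by ring
  simpa only [I_mul, logSubDigamma] using (bound y (norm_pos_iff.1 hy) harg).2
end
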